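/- There exist constants c, c' ≥ 1 such that for every n-vertex undirected graph G with nonnegative edge weights whose maximum edge weight is W_max, every ε ∈ (0,1), and every integer k with 1 ≤ k ≤ log log n, there exists a subgraph G' ⊆ G with |E(G')| ≤ n^{1+1/(2^{k+1}−1)}·(c·k/ε)^{2k}·(log n)^{c'} edges such that dist_{G'}(u,v) ≤ (1+ε')·dist_G(u,v) + β' for every u,v ∈ V, where ε' ≤ c·ε·2^k·(log log n − k + 1) and β' ≤ (c·k/ε)^k·2^k·W_max. -/

import Mathlib

/-!
The spanner is obtained from a Thorup–Zwick hierarchy with `k` levels on the vertices of `G`. The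
pairs of the hierarchy (bunches and pivots), about `n ^ (1 + 1 / (2 ^ (k + 1) - 1))` many, have two
properties (`exists_hopset`). They form a hopset: sweeping along a shortest path and ascending the
hierarchy replaces the path by `(6 r) ^ k` steps of total length at most `1 + 8 k / r` times as
large, each step being a pair of the hierarchy or an original step of the path (`hop_levels`). And
they form an emulator of multiplicative stretch `5 ^ k` (`emulator_levels`). If every pair is
realized in a subgraph `G'` with stretch `η`, then following the hopset path in `G'` and replacing
each of its few remaining short steps with the emulator gives stretch `η (1 + 8 k / r)` and an
additive error `(6 r) ^ k * 5 ^ k * O(W_max)` (`final_stretch`). With `r` of order `k / ε` this is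
the required bound, even with `ε' = O(ε)`.

Realizing the pairs directly by shortest paths would cost `n` edges per pair. If `B` is a set of
about `n / ℓ` vertices that hits each block of `ℓ` consecutive vertices of one shortest path per pair
of vertices, then a hopset for `B` turns any distance into few steps, each of which is a pair of
that hopset or a shortest path with at most `2 ℓ` edges (`hop_all`). So given pairs are realized
by adding few short paths, provided the pairs of the hopset for `B` are realized
(`realizable_step`). This is iterated with `ℓ = g, g ^ 2, g ^ 3, …`, where
`g = n ^ (1 / 2 ^ (k + 3))`: the hopset pairs get scarcer as the short paths get longer, so each
of the `2 ^ (k + 3)` rounds costs about the same number of edges (`realize_iter`).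

Each round may only lose a factor `1 + ε / 2 ^ (k + 3)`, which increases the number of steps by a
factor `2 ^ O(k ^ 2)`. To absorb it, all hopsets used for the realization have `k + 1` levels. This
lowers the exponent by `1 / (2 ^ (k + 1) - 1) - 1 / (2 ^ (k + 2) - 1) ≥ 2 / 2 ^ (k + 3)`, a saving
of `g ^ 2`, and `k ≤ log (log n)` makes `g` at least a constant times `2 ^ ((k + 3) (k + 1))`
(`exists_round_const`, `realize_hopset`).
-/

open scoped ENNReal

namespace Hopsets

/-- A weighted directed graph on vertex type `V`: a finite edge set together
with a weight function. -/
structure WDigraph (V : Type) where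
  edges : Finset (V × V)
  w : V × V → ℝ

variable {V : Type}

/-- All edge weights are nonnegative. -/
def WDigraph.Nonneg (G : WDigraph V) : Prop := ∀ e, 0 ≤ G.w e

/-- Edge weights are polynomially bounded (degree `q`) in the number of vertices. -/
def WDigraph.PolyBounded [Fintype V] (G : WDigraph V) (q : ℕ) : Prop :=
  ∀ e ∈ G.edges, G.w e ≤ (Fintype.card V : ℝ) ^ q

/-- `G` encodes an undirected graph: edges come in symmetric pairs of equal weight. -/
def WDigraph.Symmetric (G : WDigraph V) : Prop :=
  ∀ e ∈ G.edges, (e.2, e.1) ∈ G.edges ∧ G.w (e.2, e.1) = G.w e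

/-- `G` is unweighted: every edge has weight `1`. -/
def WDigraph.Unweighted (G : WDigraph V) : Prop := ∀ e, G.w e = 1

/-- `IsWalkFrom G u v l` : the list of edges `l` forms a walk from `u` to `v` in `G`. -/
def IsWalkFrom (G : WDigraph V) : V → V → List (V × V) → Prop
  | u, v, [] => u = v
  | u, v, e :: l => e ∈ G.edges ∧ e.1 = u ∧ IsWalkFrom G e.2 v l

/-- The total weight of a walk, as an extended nonnegative real. -/
noncomputable def walkWeight (G : WDigraph V) (l : List (V × V)) : ℝ≥0∞ :=
  ENNReal.ofReal ((l.map G.w).sum)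

/-- `β`-hop-bounded distance: the infimum weight of a `u`-`v` walk with at most `β` edges. -/
noncomputable def WDigraph.hopDist (G : WDigraph V) (β : ℕ) (u v : V) : ℝ≥0∞ :=
  ⨅ l ∈ {l : List (V × V) | IsWalkFrom G u v l ∧ l.length ≤ β}, walkWeight G l

/-- Distance: infimum weight of a `u`-`v` walk (`∞` if there is none). -/
noncomputable def WDigraph.dist (G : WDigraph V) (u v : V) : ℝ≥0∞ :=
  ⨅ l ∈ {l : List (V × V) | IsWalkFrom G u v l}, walkWeight G l

/-- `v` is reachable from `u` in `G`. -/
def WDigraph.Reachable (G : WDigraph V) (u v : V) : Prop :=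
  ∃ l, IsWalkFrom G u v l

/-- The graph `G ∪ H` obtained by adding the edge set `H`, each added edge `(x,y)`
weighted by `dist_G(x,y)`. -/
noncomputable def WDigraph.augment [DecidableEq V] (G : WDigraph V) (H : Finset (V × V)) :
    WDigraph V where
  edges := G.edges ∪ H
  w := fun e => if e ∈ H then (G.dist e.1 e.2).toReal else G.w e

/-- `H` is a `(β,ε)`-hopset for `G`:
`dist_G(u,v) ≤ dist^{(β)}_{G∪H}(u,v) ≤ (1+ε)·dist_G(u,v)` for all `u, v`. -/
def IsHopset [DecidableEq V] (G : WDigraph V) (β : ℕ) (ε : ℝ) (H : Finset (V × V)) : Prop :=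
  ∀ u v, G.dist u v ≤ (G.augment H).hopDist β u v ∧
    (G.augment H).hopDist β u v ≤ ENNReal.ofReal (1 + ε) * G.dist u v

/-- The subgraph of `G` with edge set `E'` (same weights). -/
def WDigraph.sub (G : WDigraph V) (E' : Finset (V × V)) : WDigraph V :=
  ⟨E', G.w⟩

/-- `E'` (a subgraph of `G`) is an `r`-missing `t`-spanner: for every reachable pair
`(u,v)` there is a `u`-`v` walk in `G` of weight at most `t·dist_G(u,v)` with at most
`r` edges outside `E'`. -/
def IsMissingSpanner [DecidableEq V] (G : WDigraph V) (E' : Finset (V × V))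
    (r : ℕ) (t : ℝ) : Prop :=
  ∀ u v, G.Reachable u v → ∃ l, IsWalkFrom G u v l ∧
    walkWeight G l ≤ ENNReal.ofReal t * G.dist u v ∧
    (l.filter (fun e => decide (e ∉ E'))).length ≤ r

end Hopsets

/-! ### Hop paths and the levels of the hierarchy -/

namespace Hopsets

/-- `Hop d R h u v l`: from `u` one can get to `v` by at most `h` steps in the relation `R`, of
total `d`-length at most `l`. Only the set `S` of steps is recorded; that these steps connect `u`
to `v` is expressed by saying that every distance function `d'` that distorts each step by at most
`d ↦ η * d + α` satisfies `d' u v ≤ η * l + h * α`. -/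
def Hop {V : Type} (d : V → V → ℝ≥0∞) (R : V → V → Prop) (h : ℕ) (u v : V) (l : ℝ) : Prop :=
  ∃ S : Finset (V × V), S.card ≤ h ∧ (∀ e ∈ S, R e.1 e.2) ∧
    ∀ (d' : V → V → ℝ≥0∞) (η α : ℝ≥0∞), (∀ x, d' x x = 0) →
      (∀ x y z, d' x z ≤ d' x y + d' y z) →
      (∀ e ∈ S, d' e.1 e.2 ≤ η * d e.1 e.2 + α) →
      d' u v ≤ η * ENNReal.ofReal l + h * α

section Hop

variable {V : Type} {d : V → V → ℝ≥0∞} {R : V → V → Prop}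

lemma Hop.mono {h h' : ℕ} {u v : V} {l l' : ℝ} (H : Hop d R h u v l) (hh : h ≤ h')
    (hl : l ≤ l') : Hop d R h' u v l' := by
  obtain ⟨S, h1, h2, h3⟩ := H
  refine ⟨S, h1.trans hh, h2, fun d' η α a b c => (h3 d' η α a b c).trans ?_⟩
  gcongr

lemma Hop.rfl' (u : V) : Hop d R 0 u u 0 :=
  ⟨∅, by simp, by simp, fun d' η α a b c => by simp [a]⟩

lemma Hop.single {u v : V} {l : ℝ} (h : R u v) (hl : d u v ≤ ENNReal.ofReal l) :
    Hop d R 1 u v l := by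
  refine ⟨{(u, v)}, by simp, by simpa using h, fun d' η α a b c => ?_⟩
  have := c (u, v) (by simp)
  simp only [Nat.cast_one, one_mul]
  exact this.trans (by gcongr)

lemma Hop.trans {h h' : ℕ} {u v w : V} {l l' : ℝ} (H : Hop d R h u v l) (H' : Hop d R h' v w l')
    (h0 : 0 ≤ l) (h0' : 0 ≤ l') : Hop d R (h + h') u w (l + l') := by
  classical
  obtain ⟨S, h1, h2, h3⟩ := H
  obtain ⟨S', h1', h2', h3'⟩ := H'
  refine ⟨S ∪ S', (Finset.card_union_le _ _).trans (by omega), ?_, fun d' η α a b c => ?_⟩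
  · intro e he
    rcases Finset.mem_union.1 he with he | he
    exacts [h2 e he, h2' e he]
  · have e1 := h3 d' η α a b (fun e he => c e (Finset.mem_union_left _ he))
    have e2 := h3' d' η α a b (fun e he => c e (Finset.mem_union_right _ he))
    calc d' u w ≤ d' u v + d' v w := b _ _ _
      _ ≤ _ := add_le_add e1 e2
      _ = _ := by rw [ENNReal.ofReal_add h0 h0']; push_cast; ring

lemma Hop.mono_rel {R' : V → V → Prop} {h : ℕ} {u v : V} {l : ℝ} (H : Hop d R h u v l)
    (hR : ∀ x y, R x y → R' x y) : Hop d R' h u v l := by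
  obtain ⟨S, h1, h2, h3⟩ := H
  exact ⟨S, h1, fun e he => hR _ _ (h2 e he), h3⟩

/-- Some point of `A` lies within distance `c` of `v`. -/
def Near (d : V → V → ℝ≥0∞) (v : V) (A : Finset V) (c : ℝ) : Prop :=
  ∃ a ∈ A, d v a ≤ ENNReal.ofReal c

/-- Sweeping from the left with steps of length `δ`: either the whole interval is traversed, or the
sweep stops at a point close to `A`. -/
lemma sweep_left {A : Finset V} {x : ℕ → V} {L : ℕ → ℝ} (hL : Monotone L)
    (hs : ∀ c, R (x c) (x (c + 1)))
    (hd : ∀ a b, a ≤ b → d (x a) (x b) ≤ ENNReal.ofReal (L b - L a))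
    {h : ℕ} {e : ℝ} (he : 0 ≤ e) {δ : ℝ} (hδ : 0 ≤ δ)
    (ih : ∀ a b, a ≤ b → Hop d R h (x a) (x b) ((1 + e) * (L b - L a)) ∨
      (Near d (x a) A (2 * (L b - L a)) ∧ Near d (x b) A (2 * (L b - L a))))
    (b : ℕ) : ∀ j : ℕ, ∀ a, a ≤ b → L b - L a ≤ j * δ →
      Hop d R ((j + 1) * (h + 1)) (x a) (x b) ((1 + e) * (L b - L a)) ∨
      ∃ f, a ≤ f ∧ f ≤ b ∧ Near d (x f) A (2 * δ) ∧
        Hop d R ((j + 1) * (h + 1)) (x a) (x f) ((1 + e) * (L f - L a)) := by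
  intro j
  induction j with
  | zero =>
    intro a hab hj
    have hba := hL hab
    rcases ih a b hab with H | H
    · exact Or.inl (H.mono (by omega) le_rfl)
    · refine Or.inr ⟨a, le_rfl, hab, ?_, (Hop.rfl' _).mono (by omega) (by simp)⟩
      obtain ⟨p, hp, hp2⟩ := H.1
      refine ⟨p, hp, hp2.trans (ENNReal.ofReal_le_ofReal ?_)⟩
      simp at hj
      linarith
  | succ j IH =>
    intro a hab hj
    -- `c` is the furthest point that is within `δ` of `a`
    obtain ⟨c, hc, hmax⟩ : ∃ c ∈ (Finset.Icc a b).filter (fun c => L c - L a ≤ δ),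
        ∀ c' ∈ (Finset.Icc a b).filter (fun c => L c - L a ≤ δ), c' ≤ c := by
      apply Finset.exists_max_image _ (fun c => c)
      exact ⟨a, by simp [hab, hδ]⟩
    simp only [Finset.mem_filter, Finset.mem_Icc] at hc hmax
    obtain ⟨⟨hac, hcb⟩, hcδ⟩ := hc
    have hLac := hL hac
    rcases ih a c hac with H | H
    swap
    · refine Or.inr ⟨a, le_rfl, hab, ?_, (Hop.rfl' _).mono (by omega) (by simp)⟩
      obtain ⟨p, hp, hp2⟩ := H.1
      exact ⟨p, hp, hp2.trans (ENNReal.ofReal_le_ofReal (by linarith))⟩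
    rcases hcb.eq_or_lt with rfl | hlt
    · exact Or.inl (H.mono (by nlinarith) le_rfl)
    have hgt : δ < L (c + 1) - L a := by
      by_contra hcon
      have := hmax (c + 1) ⟨⟨by omega, by omega⟩, not_lt.1 hcon⟩
      omega
    have hLc := hL (Nat.le_succ c)
    have hstep : Hop d R 1 (x c) (x (c + 1)) ((1 + e) * (L (c + 1) - L c)) :=
      Hop.single (hs c) ((hd c (c + 1) (by omega)).trans
        (ENNReal.ofReal_le_ofReal (by simp only [Nat.succ_eq_add_one] at hLc; nlinarith)))
    simp only [Nat.succ_eq_add_one] at hLc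
    have H2 := H.trans hstep (by apply mul_nonneg <;> linarith) (by apply mul_nonneg <;> linarith)
    have hjj : L b - L (c + 1) ≤ j * δ := by push_cast at hj; linarith
    rcases IH (c + 1) (by omega) hjj with K | ⟨f, hf1, hf2, hf3, K⟩
    · have hLb := hL (show c + 1 ≤ b by omega)
      left
      refine (H2.trans K (add_nonneg ?_ ?_) ?_).mono (by nlinarith) (by linarith)
      all_goals apply mul_nonneg <;> linarith
    · have hLb := hL hf1
      refine Or.inr ⟨f, by omega, hf2, hf3, ?_⟩
      refine (H2.trans K (add_nonneg ?_ ?_) ?_).mono (by nlinarith) (by linarith)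
      all_goals apply mul_nonneg <;> linarith

/-- The mirror image of `sweep_left`. -/
lemma sweep_right {A : Finset V} {x : ℕ → V} {L : ℕ → ℝ} (hL : Monotone L)
    (hs : ∀ c, R (x c) (x (c + 1)))
    (hd : ∀ a b, a ≤ b → d (x a) (x b) ≤ ENNReal.ofReal (L b - L a))
    {h : ℕ} {e : ℝ} (he : 0 ≤ e) {δ : ℝ} (hδ : 0 ≤ δ)
    (ih : ∀ a b, a ≤ b → Hop d R h (x a) (x b) ((1 + e) * (L b - L a)) ∨
      (Near d (x a) A (2 * (L b - L a)) ∧ Near d (x b) A (2 * (L b - L a))))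
    (a : ℕ) : ∀ j : ℕ, ∀ b, a ≤ b → L b - L a ≤ j * δ →
      Hop d R ((j + 1) * (h + 1)) (x a) (x b) ((1 + e) * (L b - L a)) ∨
      ∃ f, a ≤ f ∧ f ≤ b ∧ Near d (x f) A (2 * δ) ∧
        Hop d R ((j + 1) * (h + 1)) (x f) (x b) ((1 + e) * (L b - L f)) := by
  intro j
  induction j with
  | zero =>
    intro b hab hj
    have hba := hL hab
    rcases ih a b hab with H | H
    · exact Or.inl (H.mono (by omega) le_rfl)
    · refine Or.inr ⟨b, hab, le_rfl, ?_, (Hop.rfl' _).mono (by omega) (by simp)⟩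
      obtain ⟨p, hp, hp2⟩ := H.2
      refine ⟨p, hp, hp2.trans (ENNReal.ofReal_le_ofReal ?_)⟩
      simp at hj
      linarith
  | succ j IH =>
    intro b hab hj
    obtain ⟨c, hc, hmin⟩ : ∃ c ∈ (Finset.Icc a b).filter (fun c => L b - L c ≤ δ),
        ∀ c' ∈ (Finset.Icc a b).filter (fun c => L b - L c ≤ δ), c ≤ c' := by
      apply Finset.exists_min_image _ (fun c => c)
      exact ⟨b, by simp [hab, hδ]⟩
    simp only [Finset.mem_filter, Finset.mem_Icc] at hc hmin
    obtain ⟨⟨hac, hcb⟩, hcδ⟩ := hc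
    have hLcb := hL hcb
    rcases ih c b hcb with H | H
    swap
    · refine Or.inr ⟨b, hab, le_rfl, ?_, (Hop.rfl' _).mono (by omega) (by simp)⟩
      obtain ⟨p, hp, hp2⟩ := H.2
      exact ⟨p, hp, hp2.trans (ENNReal.ofReal_le_ofReal (by linarith))⟩
    rcases hac.eq_or_lt with rfl | hlt
    · exact Or.inl (H.mono (by nlinarith) le_rfl)
    obtain ⟨c, rfl⟩ : ∃ c', c = c' + 1 := ⟨c - 1, by omega⟩
    have hgt : δ < L b - L c := by
      by_contra hcon
      have := hmin c ⟨⟨by omega, by omega⟩, not_lt.1 hcon⟩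
      omega
    have hLc : L c ≤ L (c + 1) := hL (Nat.le_succ c)
    have hstep : Hop d R 1 (x c) (x (c + 1)) ((1 + e) * (L (c + 1) - L c)) :=
      Hop.single (hs c) ((hd c (c + 1) (by omega)).trans
        (ENNReal.ofReal_le_ofReal (by nlinarith)))
    have H2 := hstep.trans H (by apply mul_nonneg <;> linarith) (by apply mul_nonneg <;> linarith)
    have hjj : L c - L a ≤ j * δ := by push_cast at hj; linarith
    rcases IH c (by omega) hjj with K | ⟨f, hf1, hf2, hf3, K⟩
    · have hLb := hL (show a ≤ c by omega)
      left
      refine (K.trans H2 ?_ (add_nonneg ?_ ?_)).mono (by nlinarith) (by linarith)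
      all_goals apply mul_nonneg <;> linarith
    · have hLb := hL hf2
      refine Or.inr ⟨f, hf1, by omega, hf3, ?_⟩
      refine (K.trans H2 ?_ (add_nonneg ?_ ?_)).mono (by nlinarith) (by linarith)
      all_goals apply mul_nonneg <;> linarith

/-- The level-by-level analysis of the Thorup–Zwick hierarchy along a path `x`, parametrised by
arc length `L`. At level `i`, each interval of the path is either traversed with few hops and
small stretch, or both its end points are close (relative to its length) to `A (i + 1)`. -/
lemma hop_levels {A : ℕ → Finset V} {x : ℕ → V} {L : ℕ → ℝ} (hL : Monotone L)
    (htri : ∀ x y z, d x z ≤ d x y + d y z) (hsym : ∀ x y, d x y = d y x)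
    (hs : ∀ c, R (x c) (x (c + 1))) (hx : ∀ c, x c ∈ A 0)
    (hd : ∀ a b, a ≤ b → d (x a) (x b) ≤ ENNReal.ofReal (L b - L a))
    (hb : ∀ i, ∀ u ∈ A i, ∀ v ∈ A i, R u v ∨
      ((∃ a ∈ A (i + 1), d u a ≤ d u v) ∧ (∃ a ∈ A (i + 1), d v a ≤ d u v)))
    (hp : ∀ i, ∀ v ∈ A 0, ∀ a ∈ A (i + 1), ∃ p ∈ A (i + 1), R v p ∧ R p v ∧ d v p ≤ d v a)
    {r : ℕ} (hr : 6 ≤ r) (i : ℕ) : ∀ a b, a ≤ b →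
      Hop d R ((6 * r) ^ i) (x a) (x b) ((1 + i * (8 / r)) * (L b - L a)) ∨
      (Near d (x a) (A (i + 1)) (2 * (L b - L a)) ∧
        Near d (x b) (A (i + 1)) (2 * (L b - L a))) := by
  have hr0 : (6 : ℝ) ≤ r := by exact_mod_cast hr
  induction i with
  | zero =>
    intro a b hab
    have hba := hL hab
    have hdab := hd a b hab
    rcases hb 0 _ (hx a) _ (hx b) with H | ⟨⟨p, hp1, hp2⟩, ⟨q, hq1, hq2⟩⟩
    · left
      simpa using Hop.single H hdab
    · right
      have := ENNReal.ofReal_le_ofReal (show L b - L a ≤ 2 * (L b - L a) by linarith)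
      exact ⟨⟨p, hp1, hp2.trans (hdab.trans this)⟩, ⟨q, hq1, hq2.trans (hdab.trans this)⟩⟩
  | succ i IH =>
    intro a b hab
    have hba := hL hab
    set D := L b - L a with hD
    have hD0 : 0 ≤ D := by linarith
    set δ := D / r with hδd
    have hrpos : (0 : ℝ) < r := by linarith
    have hδ : 0 ≤ δ := by positivity
    have hrδ : r * δ = D := by rw [hδd]; field_simp
    have h6δ : 6 * δ ≤ D := by nlinarith
    set e : ℝ := i * (8 / r) with he
    have he0 : 0 ≤ e := by positivity
    have hee : (1 + ((i + 1 : ℕ) : ℝ) * (8 / r)) * D = (1 + e) * D + 8 * δ := by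
      rw [he, hδd]; push_cast; ring
    have h1 : 1 ≤ (6 * r) ^ i := Nat.one_le_pow _ _ (by omega)
    set h := (6 * r) ^ i with hh
    have hbig : 2 * ((r + 1) * (h + 1)) + 3 ≤ (6 * r) ^ (i + 1) := by
      rw [pow_succ, ← hh]; nlinarith
    rw [hee]
    -- Sweep from both ends. If neither sweep crosses the interval, the stopping points `x f` and
    -- `x g` have nearby pivots `p` and `q`, and level `i + 1` decides between the step `p q` and
    -- passing to the next level. The detour costs at most `8 * δ`.
    rcases sweep_left hL hs hd he0 hδ IH b r a hab (by rw [hrδ]) with K | ⟨f, hf1, hf2, hf3, K⟩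
    · exact Or.inl (K.mono (by omega) (by linarith))
    have hLf := hL hf1
    have hLf2 := hL hf2
    rcases sweep_right hL hs hd he0 hδ IH f r b hf2 (by rw [hrδ]; linarith) with
      K' | ⟨g, hg1, hg2, hg3, K'⟩
    · left
      refine (K.trans K' ?_ ?_).mono (by omega) (by nlinarith)
      all_goals apply mul_nonneg <;> linarith
    have hLg := hL hg1
    have hLg2 := hL hg2
    obtain ⟨p0, hp0, hp0d⟩ := hf3
    obtain ⟨q0, hq0, hq0d⟩ := hg3
    obtain ⟨p, hpA, hRp, hRp', hpd⟩ := hp i _ (hx f) p0 hp0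
    obtain ⟨q, hqA, hRq, hRq', hqd⟩ := hp i _ (hx g) q0 hq0
    replace hpd := hpd.trans hp0d
    replace hqd := hqd.trans hq0d
    have hpq : d p q ≤ ENNReal.ofReal (2 * δ + (L g - L f) + 2 * δ) := by
      rw [ENNReal.ofReal_add (by linarith) (by linarith),
        ENNReal.ofReal_add (by linarith) (by linarith)]
      calc d p q ≤ d p (x g) + d (x g) q := htri _ _ _
        _ ≤ d p (x f) + d (x f) (x g) + d (x g) q := by gcongr; exact htri _ _ _
        _ ≤ _ := by
          gcongr
          · rw [hsym]; exact hpd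
          · exact hd _ _ hg1
    rcases hb (i + 1) p hpA q hqA with H | ⟨⟨s, hs1, hs2⟩, ⟨t, ht1, ht2⟩⟩
    · left
      have s1 := Hop.single hRp hpd
      have s2 := Hop.single H hpq
      have s3 : Hop d R 1 q (x g) (2 * δ) := Hop.single hRq' (by rw [hsym]; exact hqd)
      have n1 : 0 ≤ (1 + e) * (L f - L a) := by apply mul_nonneg <;> linarith
      have n2 : 0 ≤ (1 + e) * (L b - L g) := by apply mul_nonneg <;> linarith
      have := (((K.trans s1 n1 (by linarith)).trans s2 (by linarith) (by linarith)).trans s3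
        (by linarith) (by linarith)).trans K' (by linarith) n2
      refine this.mono (by omega) ?_
      have : (0 : ℝ) ≤ e * (L g - L f) := by apply mul_nonneg <;> linarith
      rw [hD]
      nlinarith
    · right
      constructor
      · refine ⟨s, hs1, ?_⟩
        calc d (x a) s ≤ d (x a) (x f) + d (x f) s := htri _ _ _
          _ ≤ d (x a) (x f) + (d (x f) p + d p s) := by gcongr; exact htri _ _ _
          _ ≤ ENNReal.ofReal (L f - L a) + (ENNReal.ofReal (2 * δ) +
              ENNReal.ofReal (2 * δ + (L g - L f) + 2 * δ)) := by
            gcongr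
            · exact hd _ _ hf1
            · exact hs2.trans hpq
          _ = ENNReal.ofReal ((L f - L a) + (2 * δ + (2 * δ + (L g - L f) + 2 * δ))) := by
            rw [ENNReal.ofReal_add (p := L f - L a) (by linarith) (by linarith),
              ENNReal.ofReal_add (p := 2 * δ) (by linarith) (by linarith)]
          _ ≤ _ := ENNReal.ofReal_le_ofReal (by linarith)
      · refine ⟨t, ht1, ?_⟩
        calc d (x b) t ≤ d (x b) (x g) + d (x g) t := htri _ _ _
          _ ≤ d (x b) (x g) + (d (x g) q + d q t) := by gcongr; exact htri _ _ _
          _ ≤ ENNReal.ofReal (L b - L g) + (ENNReal.ofReal (2 * δ) +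
              ENNReal.ofReal (2 * δ + (L g - L f) + 2 * δ)) := by
            gcongr
            · rw [hsym]; exact hd _ _ hg2
            · exact ht2.trans hpq
          _ = ENNReal.ofReal ((L b - L g) + (2 * δ + (2 * δ + (L g - L f) + 2 * δ))) := by
            rw [ENNReal.ofReal_add (p := L b - L g) (by linarith) (by linarith),
              ENNReal.ofReal_add (p := 2 * δ) (by linarith) (by linarith)]
          _ ≤ _ := ENNReal.ofReal_le_ofReal (by linarith)

/-- Using hierarchy pairs alone, every distance is preserved up to a factor `5 ^ j`, where `j` is
the number of levels left above the given one. -/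
lemma emulator_levels {A : ℕ → Finset V} {d' : V → V → ℝ≥0∞} {η : ℝ≥0∞}
    (htri : ∀ x y z, d x z ≤ d x y + d y z) (hsym : ∀ x y, d x y = d y x)
    (htri' : ∀ x y z, d' x z ≤ d' x y + d' y z)
    (hA : ∀ i, A i ⊆ A 0)
    (hb : ∀ i, ∀ u ∈ A i, ∀ v ∈ A i, R u v ∨
      ((∃ a ∈ A (i + 1), d u a ≤ d u v) ∧ (∃ a ∈ A (i + 1), d v a ≤ d u v)))
    (hp : ∀ i, ∀ v ∈ A 0, ∀ a ∈ A (i + 1), ∃ p ∈ A (i + 1), R v p ∧ R p v ∧ d v p ≤ d v a)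
    (hR : ∀ u v, R u v → d' u v ≤ η * d u v) {m : ℕ} (hend : A (m + 1) = ∅) :
    ∀ j i, i + j = m → ∀ u ∈ A i, ∀ v ∈ A i, d' u v ≤ η * (5 ^ j * d u v) := by
  intro j
  induction j with
  | zero =>
    intro i hi u hu v hv
    rcases hb i u hu v hv with H | ⟨⟨a, ha, _⟩, _⟩
    · simpa using hR u v H
    · obtain rfl : i = m := by omega
      simp [hend] at ha
  | succ j IH =>
    intro i hi u hu v hv
    rcases hb i u hu v hv with H | ⟨⟨a, ha, had⟩, ⟨b, hb, hbd⟩⟩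
    · refine (hR u v H).trans ?_
      gcongr
      calc d u v = 1 * d u v := (one_mul _).symm
        _ ≤ _ := by gcongr; exact one_le_pow_of_one_le' (by norm_num) _
    obtain ⟨p, hpA, hRp, -, hpd⟩ := hp i u (hA i hu) a ha
    obtain ⟨q, hqA, -, hRq, hqd⟩ := hp i v (hA i hv) b hb
    replace hpd := hpd.trans had
    replace hqd := hqd.trans hbd
    have hpq : d p q ≤ 3 * d u v := by
      calc d p q ≤ d p v + d v q := htri _ _ _
        _ ≤ d p u + d u v + d v q := by gcongr; exact htri _ _ _
        _ ≤ d u v + d u v + d u v := by gcongr; rw [hsym]; exact hpd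
        _ = _ := by ring
    have one : (1 : ℝ≥0∞) ≤ 5 ^ j := one_le_pow_of_one_le' (by norm_num) _
    calc d' u v ≤ d' u q + d' q v := htri' _ _ _
      _ ≤ d' u p + d' p q + d' q v := by gcongr; exact htri' _ _ _
      _ ≤ η * d u v + η * (5 ^ j * (3 * d u v)) + η * d u v := by
        gcongr
        · exact (hR _ _ hRp).trans (by gcongr)
        · exact (IH (i + 1) (by omega) p hpA q hqA).trans (by gcongr)
        · refine (hR _ _ hRq).trans ?_
          rw [hsym]; gcongr
      _ = η * ((1 + 5 ^ j * 3 + 1) * d u v) := by ring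
      _ ≤ η * ((5 ^ j + 5 ^ j * 3 + 5 ^ j) * d u v) := by gcongr
      _ = _ := by ring

end Hop

end Hopsets

/-! ### Hitting sets and the Thorup–Zwick hierarchy -/

namespace Hopsets

/-- Greedy hitting set. -/
lemma hitting_set {V : Type} [DecidableEq V] (A : Finset V) (F : Finset (Finset V)) (ℓ : ℕ)
    (hℓ : 1 ≤ ℓ) (hF : ∀ S ∈ F, S ⊆ A ∧ ℓ ≤ S.card) :
    ∃ B ⊆ A, (∀ S ∈ F, ∃ x ∈ S, x ∈ B) ∧
      (B.card : ℝ) ≤ A.card / ℓ * (1 + Real.log F.card) := by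
  rcases F.eq_empty_or_nonempty with rfl | ⟨S0, hS0⟩
  · exact ⟨∅, by simp, by simp, by simp; positivity⟩
  have hAcard : ℓ ≤ A.card := (hF S0 hS0).2.trans (Finset.card_le_card (hF S0 hS0).1)
  have hℓ0 : (0 : ℝ) < ℓ := by exact_mod_cast hℓ
  have hA0 : (ℓ : ℝ) ≤ A.card := by exact_mod_cast hAcard
  have hApos : (0 : ℝ) < A.card := by linarith
  set t : ℝ := ℓ / A.card with ht
  have ht0 : 0 < t := by positivity
  have ht1 : t ≤ 1 := by rw [ht, div_le_one hApos]; exact hA0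
  have key : ∀ j : ℕ, ∃ B ⊆ A, B.card ≤ j ∧
      ((F.filter (fun S => ∀ x ∈ S, x ∉ B)).card : ℝ) ≤ F.card * (1 - t) ^ j := by
    intro j
    induction j with
    | zero =>
      refine ⟨∅, by simp, by simp, ?_⟩
      simp
    | succ j IH =>
      obtain ⟨B, hBA, hBj, hB⟩ := IH
      set U := F.filter (fun S => ∀ x ∈ S, x ∉ B) with hU
      have hcount : ∑ x ∈ A, ((U.filter (fun S => x ∈ S)).card : ℝ) = ∑ S ∈ U, (S.card : ℝ) := by
        have := Finset.sum_card_bipartiteAbove_eq_sum_card_bipartiteBelow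
          (s := A) (t := U) (fun x S => x ∈ S)
        simp only [Finset.bipartiteAbove, Finset.bipartiteBelow] at this
        have h2 : ∀ S ∈ U, (A.filter (fun x => x ∈ S)).card = S.card := by
          intro S hS
          congr 1
          have hSA := (hF S (Finset.mem_filter.1 hS).1).1
          ext x
          simp only [Finset.mem_filter]
          exact ⟨fun h => h.2, fun h => ⟨hSA h, h⟩⟩
        rw [Finset.sum_congr rfl h2] at this
        exact_mod_cast this
      have hge : ∑ x ∈ A, (t * U.card) ≤ ∑ x ∈ A, ((U.filter (fun S => x ∈ S)).card : ℝ) := by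
        rw [hcount, Finset.sum_const, nsmul_eq_mul]
        calc (A.card : ℝ) * (t * U.card) = ∑ S ∈ U, (ℓ : ℝ) := by
              rw [Finset.sum_const, nsmul_eq_mul, ht]; field_simp
          _ ≤ _ := Finset.sum_le_sum fun S hS => by
              exact_mod_cast (hF S (Finset.mem_filter.1 hS).1).2
      obtain ⟨x, hxA, hx⟩ := Finset.exists_le_of_sum_le
        (Finset.card_pos.1 (by omega)) hge
      refine ⟨insert x B, Finset.insert_subset hxA hBA,
        (Finset.card_insert_le _ _).trans (by omega), ?_⟩
      have hsub : F.filter (fun S => ∀ y ∈ S, y ∉ insert x B) ⊆ U.filter (fun S => x ∉ S) := by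
        intro S hS
        simp only [hU, Finset.mem_filter, Finset.mem_insert, not_or] at hS ⊢
        exact ⟨⟨hS.1, fun y hy => (hS.2 y hy).2⟩, fun hxS => (hS.2 x hxS).1 rfl⟩
      have hsplit := Finset.card_filter_add_card_filter_not (s := U) (fun S => x ∈ S)
      have hsplit' : ((U.filter (fun S => x ∈ S)).card : ℝ) + (U.filter (fun S => x ∉ S)).card
          = U.card := by exact_mod_cast hsplit
      have hle : ((F.filter (fun S => ∀ y ∈ S, y ∉ insert x B)).card : ℝ) ≤
          (U.filter (fun S => x ∉ S)).card := by exact_mod_cast Finset.card_le_card hsub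
      calc _ ≤ ((U.filter (fun S => x ∉ S)).card : ℝ) := hle
        _ ≤ (1 - t) * U.card := by linarith
        _ ≤ (1 - t) * (F.card * (1 - t) ^ j) := by gcongr
        _ = _ := by ring
  have hFpos : 0 < F.card := Finset.card_pos.2 ⟨S0, hS0⟩
  have hFpos' : (0 : ℝ) < F.card := by exact_mod_cast hFpos
  have hlog : 0 ≤ Real.log F.card := Real.log_natCast_nonneg _
  set j := ⌊Real.log F.card / t⌋₊ + 1 with hj
  obtain ⟨B, hBA, hBj, hB⟩ := key j
  have hjt : Real.log F.card < j * t := by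
    have := Nat.lt_floor_add_one (Real.log F.card / t)
    rw [div_lt_iff₀ ht0] at this
    exact_mod_cast this
  refine ⟨B, hBA, ?_, ?_⟩
  · have hlt : ((F.filter (fun S => ∀ x ∈ S, x ∉ B)).card : ℝ) < 1 := by
      calc _ ≤ F.card * (1 - t) ^ j := hB
        _ ≤ F.card * (Real.exp (-t)) ^ j := by
          gcongr
          exact Real.one_sub_le_exp_neg t
        _ = Real.exp (Real.log F.card - j * t) := by
          rw [← Real.exp_nat_mul, Real.exp_sub, Real.exp_log hFpos', div_eq_mul_inv,
            ← Real.exp_neg]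
          ring_nf
        _ < 1 := by rw [Real.exp_lt_one_iff]; linarith
    have hzero : (F.filter (fun S => ∀ x ∈ S, x ∉ B)).card = 0 := by
      have : (F.filter (fun S => ∀ x ∈ S, x ∉ B)).card < 1 := by exact_mod_cast hlt
      omega
    intro S hS
    by_contra hcon
    push Not at hcon
    have : S ∈ F.filter (fun S => ∀ x ∈ S, x ∉ B) := Finset.mem_filter.2 ⟨hS, hcon⟩
    rw [Finset.card_eq_zero] at hzero
    simp [hzero] at this
  · have hinv : 1 ≤ 1 / t := by rw [le_div_iff₀ ht0]; linarith
    have hAt : (A.card : ℝ) / ℓ = 1 / t := by rw [ht]; field_simp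
    calc (B.card : ℝ) ≤ j := by exact_mod_cast hBj
      _ ≤ Real.log F.card / t + 1 := by
        rw [hj]; push_cast
        gcongr
        exact Nat.floor_le (by positivity)
      _ ≤ Real.log F.card / t + 1 / t := by linarith
      _ = _ := by rw [hAt]; ring

/-- The `s` points of `A` with smallest `f`. -/
lemma exists_closest {V : Type} [DecidableEq V] (A : Finset V) (f : V → ℝ≥0∞) :
    ∀ s : ℕ, s ≤ A.card → ∃ T ⊆ A, T.card = s ∧ ∀ t ∈ T, ∀ u ∈ A, u ∉ T → f t ≤ f u := by
  intro s
  induction s with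
  | zero => exact fun _ => ⟨∅, by simp, by simp, by simp⟩
  | succ s IH =>
    intro hs
    obtain ⟨T, hTA, hTs, hT⟩ := IH (by omega)
    have hne : (A \ T).Nonempty := by
      rw [← Finset.card_pos]
      have := Finset.le_card_sdiff T A
      omega
    obtain ⟨y, hy, hmin⟩ := Finset.exists_min_image (A \ T) f hne
    simp only [Finset.mem_sdiff] at hy hmin
    refine ⟨insert y T, Finset.insert_subset hy.1 hTA, ?_, ?_⟩
    · rw [Finset.card_insert_of_notMem hy.2, hTs]
    · intro t ht u hu huT
      simp only [Finset.mem_insert, not_or] at ht huT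
      rcases ht with rfl | ht
      · exact hmin u ⟨hu, huT.2⟩
      · exact hT t ht u hu huT.2

/-- One sampling step of the hierarchy: a set `A'` of about `|A| / s` points such that every
bunch (the points of `A` strictly closer than `A'`) has at most `s` elements. -/
lemma exists_sample {V : Type} [DecidableEq V] (d : V → V → ℝ≥0∞) (A : Finset V) (s : ℕ)
    (hs : 1 ≤ s) :
    ∃ A' ⊆ A, (A'.card : ℝ) ≤ A.card / s * (1 + Real.log A.card) ∧
      ∀ v ∈ A, (A.filter (fun u => ∀ a ∈ A', d v u < d v a)).card ≤ s := by
  by_cases hsA : s ≤ A.card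
  · choose T hTA hTs hT using fun v => exists_closest A (d v) s hsA
    obtain ⟨B, hBA, hB, hBc⟩ := hitting_set A (A.image T) s hs (by
      intro S hS
      obtain ⟨v, -, rfl⟩ := Finset.mem_image.1 hS
      exact ⟨hTA v, (hTs v).ge⟩)
    refine ⟨B, hBA, hBc.trans ?_, ?_⟩
    · have hne : 0 < (A.image T).card := by
        rw [Finset.card_pos, Finset.image_nonempty, ← Finset.card_pos]; omega
      gcongr
      exact Finset.card_image_le
    · intro v hv
      rw [← hTs v]
      apply Finset.card_le_card
      intro u hu
      simp only [Finset.mem_filter] at hu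
      by_contra huT
      obtain ⟨a, haT, haB⟩ := hB (T v) (Finset.mem_image_of_mem _ hv)
      exact absurd (hu.2 a haB) (not_lt.2 (hT v a haT u hu.1 huT))
  · refine ⟨∅, by simp, ?_, ?_⟩
    · simp only [Finset.card_empty, Nat.cast_zero]
      have := Real.log_natCast_nonneg A.card
      positivity
    · intro v _
      exact (Finset.card_filter_le _ _).trans (by omega)

/-- The Thorup–Zwick hierarchy. With `|A i| ≤ X * (N / X) ^ (2 ^ i)` each level has about `X` bunch
pairs, and the sets run empty once this bound drops below one. -/
lemma exists_hierarchy {V : Type} [DecidableEq V] [Fintype V] (d : V → V → ℝ≥0∞) (A0 : Finset V)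
    {N X lam : ℝ} (hN : (A0.card : ℝ) ≤ N) (hN0 : 0 < N) (hNX : N ≤ X)
    (hlam : 1 + Real.log (Fintype.card V) ≤ lam) {m : ℕ}
    (hm : X * (N / X) ^ (2 ^ (m + 1)) < 1) :
    ∃ A : ℕ → Finset V, A 0 = A0 ∧ (∀ i, A (i + 1) ⊆ A i) ∧ A (m + 1) = ∅ ∧
      ∀ i, ((((A i) ×ˢ (A i)).filter (fun e => ∀ a ∈ A (i + 1), d e.1 e.2 < d e.1 a)).card : ℝ)
        ≤ 2 * lam * X := by
  have hX : 0 < X := hN0.trans_le hNX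
  have hlam1 : 1 ≤ lam := by
    have := Real.log_natCast_nonneg (Fintype.card V)
    linarith
  have step : ∀ (A : Finset V) (M : ℝ), ∃ A' ⊆ A, (A.card : ℝ) ≤ M → 0 < M → M ≤ X →
      (A'.card : ℝ) ≤ M ^ 2 / X ∧
      (((A ×ˢ A).filter (fun e => ∀ a ∈ A', d e.1 e.2 < d e.1 a)).card : ℝ) ≤ 2 * lam * X := by
    intro A M
    by_cases hM : 0 < M
    swap
    · exact ⟨∅, by simp, fun _ h => absurd h hM⟩
    set s := ⌈lam * X / M⌉₊ with hs
    have hs1 : 1 ≤ s := Nat.ceil_pos.2 (by positivity)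
    obtain ⟨A', hA'A, hA'c, hA'b⟩ := exists_sample d A s hs1
    refine ⟨A', hA'A, fun hAM _ hMX => ⟨?_, ?_⟩⟩
    · rcases A.eq_empty_or_nonempty with rfl | hne
      · obtain rfl := Finset.subset_empty.1 hA'A
        simp only [Finset.card_empty, Nat.cast_zero]; positivity
      have hApos : (0 : ℝ) < A.card := by exact_mod_cast hne.card_pos
      have hlA : 1 + Real.log A.card ≤ lam := by
        refine le_trans ?_ hlam
        have : (A.card : ℝ) ≤ Fintype.card V := by exact_mod_cast Finset.card_le_univ A
        gcongr
      have hlA0 : 0 ≤ Real.log A.card := Real.log_natCast_nonneg _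
      have hsc : lam * X / M ≤ s := Nat.le_ceil _
      have hLM : 0 < lam * X / M := by positivity
      calc (A'.card : ℝ) ≤ A.card / s * (1 + Real.log A.card) := hA'c
        _ ≤ M / (lam * X / M) * lam := by gcongr
        _ = _ := by field_simp
    · have hcard : ((A ×ˢ A).filter (fun e => ∀ a ∈ A', d e.1 e.2 < d e.1 a)).card
          ≤ A.card * s := by
        have hsub : (A ×ˢ A).filter (fun e => ∀ a ∈ A', d e.1 e.2 < d e.1 a) ⊆
            A.biUnion (fun v => (A.filter (fun u => ∀ a ∈ A', d v u < d v a)).image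
              (fun u => (v, u))) := by
          rintro ⟨v, u⟩ he
          simp only [Finset.mem_filter, Finset.mem_product] at he
          simp only [Finset.mem_biUnion, Finset.mem_image, Finset.mem_filter]
          exact ⟨v, he.1.1, u, ⟨he.1.2, he.2⟩, rfl⟩
        refine (Finset.card_le_card hsub).trans (Finset.card_biUnion_le_card_mul _ _ _ ?_)
        intro v hv
        refine Finset.card_image_le.trans ?_
        refine le_trans (le_of_eq ?_) (hA'b v hv)
        congr
      have hsc : (s : ℝ) ≤ lam * X / M + 1 := (Nat.ceil_lt_add_one (by positivity)).le
      calc _ ≤ (A.card : ℝ) * s := by exact_mod_cast hcard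
        _ ≤ M * (lam * X / M + 1) := by gcongr
        _ = lam * X + M := by field_simp
        _ ≤ _ := by nlinarith
  choose g hgA hg using step
  let Ns : ℕ → ℝ := fun i => X * (N / X) ^ (2 ^ i)
  let A : ℕ → Finset V := fun i => Nat.rec A0 (fun i Ai => g Ai (Ns i)) i
  have hA1 : ∀ i, A (i + 1) = g (A i) (Ns i) := fun i => rfl
  have hNs0 : ∀ i, 0 < Ns i := fun i => by positivity
  have hNsX : ∀ i, Ns i ≤ X := by
    intro i
    have : (N / X) ^ (2 ^ i) ≤ 1 := pow_le_one₀ (by positivity) (by rw [div_le_one hX]; exact hNX)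
    calc Ns i ≤ X * 1 := mul_le_mul_of_nonneg_left this hX.le
      _ = X := mul_one X
  have hcard : ∀ i, ((A i).card : ℝ) ≤ Ns i := by
    intro i
    induction i with
    | zero =>
      have : Ns 0 = N := by simp only [Ns, pow_zero, pow_one]; field_simp
      rw [this]; exact hN
    | succ i IH =>
      rw [hA1]
      refine (hg _ _ IH (hNs0 i) (hNsX i)).1.trans (le_of_eq ?_)
      simp only [Ns]
      rw [pow_succ 2 i, pow_mul]
      field_simp
  refine ⟨A, rfl, fun i => hgA _ _, ?_, fun i => (hg _ _ (hcard i) (hNs0 i) (hNsX i)).2⟩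
  have : ((A (m + 1)).card : ℝ) < 1 := (hcard (m + 1)).trans_lt hm
  rw [← Finset.card_eq_zero]
  have : (A (m + 1)).card < 1 := by exact_mod_cast this
  omega

/-- The Thorup–Zwick pairs form a hopset for all paths within `A0`, simultaneously for all
accuracies `r`, and an emulator with multiplicative stretch `5 ^ m`. -/
lemma exists_hopset {V : Type} [DecidableEq V] [Fintype V] (d : V → V → ℝ≥0∞)
    (htri : ∀ x y z, d x z ≤ d x y + d y z) (hsym : ∀ x y, d x y = d y x) (A0 : Finset V)
    {N X lam : ℝ} (hN : (A0.card : ℝ) ≤ N) (hN0 : 0 < N) (hNX : N ≤ X)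
    (hlam : 1 + Real.log (Fintype.card V) ≤ lam) {m : ℕ}
    (hm : X * (N / X) ^ (2 ^ (m + 1)) < 1) :
    ∃ H : Finset (V × V), (H.card : ℝ) ≤ 6 * (m + 1) * lam * X ∧
      (∀ (x : ℕ → V) (L : ℕ → ℝ) (R : V → V → Prop), Monotone L → (∀ c, x c ∈ A0) →
        (∀ a b, a ≤ b → d (x a) (x b) ≤ ENNReal.ofReal (L b - L a)) →
        (∀ e ∈ H, R e.1 e.2) → (∀ c, R (x c) (x (c + 1))) → ∀ r : ℕ, 6 ≤ r →
        ∀ a b, a ≤ b →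
          Hop d R ((6 * r) ^ m) (x a) (x b) ((1 + m * (8 / r)) * (L b - L a))) ∧
      (∀ (d' : V → V → ℝ≥0∞) (η : ℝ≥0∞), (∀ x y z, d' x z ≤ d' x y + d' y z) →
        (∀ e ∈ H, d' e.1 e.2 ≤ η * d e.1 e.2) →
        ∀ u ∈ A0, ∀ v ∈ A0, d' u v ≤ η * (5 ^ m * d u v)) := by
  obtain ⟨A, hA0, hAs, hAe, hAc⟩ := exists_hierarchy d A0 hN hN0 hNX hlam hm
  have hX : 0 < X := hN0.trans_le hNX
  have hlam1 : 1 ≤ lam := by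
    have := Real.log_natCast_nonneg (Fintype.card V)
    linarith
  have hanti : Antitone A := antitone_nat_of_succ_le hAs
  have hA : ∀ i, A i ⊆ A 0 := fun i => hanti (Nat.zero_le i)
  have hemp : ∀ i, m < i → A i = ∅ := fun i hi =>
    Finset.subset_empty.1 (hAe ▸ hanti (show m + 1 ≤ i from hi))
  have piv : ∀ (i : ℕ) (v : V), ∃ p, (A (i + 1)).Nonempty →
      p ∈ A (i + 1) ∧ ∀ a ∈ A (i + 1), d v p ≤ d v a := by
    intro i v
    by_cases h : (A (i + 1)).Nonempty
    · obtain ⟨p, hp, hp2⟩ := Finset.exists_min_image (A (i + 1)) (d v) h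
      exact ⟨p, fun _ => ⟨hp, hp2⟩⟩
    · exact ⟨v, fun h' => absurd h' h⟩
  choose p hp using piv
  let Bu : ℕ → Finset (V × V) := fun i =>
    ((A i) ×ˢ (A i)).filter (fun e => ∀ a ∈ A (i + 1), d e.1 e.2 < d e.1 a)
  let Pv : ℕ → Finset (V × V) := fun i => A0.image (fun v => (v, p i v))
  let H : Finset (V × V) := (Finset.range (m + 1)).biUnion fun i =>
    (Bu i ∪ (Bu i).image Prod.swap) ∪ (Pv i ∪ (Pv i).image Prod.swap)
  have hHb : ∀ i, i ≤ m → ∀ e ∈ Bu i, e ∈ H ∧ e.swap ∈ H := by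
    intro i hi e he
    constructor <;> refine Finset.mem_biUnion.2 ⟨i, by simpa using hi, ?_⟩
    · exact Finset.mem_union_left _ (Finset.mem_union_left _ he)
    · exact Finset.mem_union_left _ (Finset.mem_union_right _ (Finset.mem_image_of_mem _ he))
  have hHp : ∀ i, i ≤ m → ∀ e ∈ Pv i, e ∈ H ∧ e.swap ∈ H := by
    intro i hi e he
    constructor <;> refine Finset.mem_biUnion.2 ⟨i, by simpa using hi, ?_⟩
    · exact Finset.mem_union_right _ (Finset.mem_union_left _ he)
    · exact Finset.mem_union_right _ (Finset.mem_union_right _ (Finset.mem_image_of_mem _ he))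
  have hbR : ∀ R : V → V → Prop, (∀ e ∈ H, R e.1 e.2) → ∀ i, ∀ u ∈ A i, ∀ v ∈ A i, R u v ∨
      ((∃ a ∈ A (i + 1), d u a ≤ d u v) ∧ (∃ a ∈ A (i + 1), d v a ≤ d u v)) := by
    intro R hR i u hu v hv
    by_cases hi : i ≤ m
    swap
    · rw [hemp i (by omega)] at hu; simp at hu
    by_cases h1 : (u, v) ∈ Bu i
    · exact Or.inl (hR _ (hHb i hi _ h1).1)
    by_cases h2 : (v, u) ∈ Bu i
    · exact Or.inl (hR _ (hHb i hi _ h2).2)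
    right
    simp only [Bu, Finset.mem_filter, Finset.mem_product, hu, hv, true_and, not_forall,
      not_lt] at h1 h2
    obtain ⟨a, ha, ha2⟩ := h1
    obtain ⟨b, hb, hb2⟩ := h2
    exact ⟨⟨a, ha, ha2⟩, ⟨b, hb, by rwa [hsym u v]⟩⟩
  have hpR : ∀ R : V → V → Prop, (∀ e ∈ H, R e.1 e.2) → ∀ i, ∀ v ∈ A 0, ∀ a ∈ A (i + 1),
      ∃ p ∈ A (i + 1), R v p ∧ R p v ∧ d v p ≤ d v a := by
    intro R hR i v hv a ha
    by_cases hi : i ≤ m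
    swap
    · rw [hemp (i + 1) (by omega)] at ha; simp at ha
    have h1 : (v, p i v) ∈ Pv i := Finset.mem_image_of_mem (fun v => (v, p i v)) (hA0 ▸ hv)
    obtain ⟨h2, h3⟩ := hHp i hi _ h1
    exact ⟨p i v, (hp i v ⟨a, ha⟩).1, hR _ h2, hR _ h3, (hp i v ⟨a, ha⟩).2 a ha⟩
  refine ⟨H, ?_, ?_, ?_⟩
  · have hone : ∀ i, ((((Bu i ∪ (Bu i).image Prod.swap) ∪ (Pv i ∪ (Pv i).image Prod.swap)).card
        : ℕ) : ℝ) ≤ 6 * lam * X := by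
      intro i
      have c1 : ((Bu i).card : ℝ) ≤ 2 * lam * X := hAc i
      have c2 : ((Pv i).card : ℝ) ≤ X := by
        have : (Pv i).card ≤ A0.card := Finset.card_image_le
        have : ((Pv i).card : ℝ) ≤ A0.card := by exact_mod_cast this
        linarith
      have e1 : ((Bu i ∪ (Bu i).image Prod.swap) ∪ (Pv i ∪ (Pv i).image Prod.swap)).card ≤
          ((Bu i).card + (Bu i).card) + ((Pv i).card + (Pv i).card) := by
        refine (Finset.card_union_le _ _).trans ?_
        exact Nat.add_le_add
          ((Finset.card_union_le _ _).trans (Nat.add_le_add le_rfl Finset.card_image_le))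
          ((Finset.card_union_le _ _).trans (Nat.add_le_add le_rfl Finset.card_image_le))
      have e2 : ((((Bu i ∪ (Bu i).image Prod.swap) ∪ (Pv i ∪ (Pv i).image Prod.swap)).card
        : ℕ) : ℝ) ≤ ((Bu i).card + (Bu i).card) + ((Pv i).card + (Pv i).card) := by
        exact_mod_cast e1
      nlinarith
    calc (H.card : ℝ) ≤ ∑ i ∈ Finset.range (m + 1),
        ((((Bu i ∪ (Bu i).image Prod.swap) ∪ (Pv i ∪ (Pv i).image Prod.swap)).card : ℕ) : ℝ) := by
          exact_mod_cast Finset.card_biUnion_le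
      _ ≤ ∑ i ∈ Finset.range (m + 1), 6 * lam * X := Finset.sum_le_sum fun i _ => hone i
      _ = _ := by simp; ring
  · intro x L R hL hx hd hR hs r hr a b hab
    rcases hop_levels hL htri hsym hs (by rwa [hA0]) hd (hbR R hR) (hpR R hR) hr m a b hab with
      K | ⟨⟨y, hy, _⟩, _⟩
    · exact K
    · simp [hAe] at hy
  · intro d' η htri' hH u hu v hv
    have := emulator_levels (R := fun u v => (u, v) ∈ H) htri hsym htri' hA
      (hbR (fun u v => (u, v) ∈ H) (fun e he => he)) (hpR (fun u v => (u, v) ∈ H) (fun e he => he))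
      (fun u v h => hH _ h) hAe m 0 (by omega) u (hA0 ▸ hu) v (hA0 ▸ hv)
    exact this

end Hopsets

/-! ### Walks, shortest paths and hitting them in blocks -/

namespace Hopsets

section Walks

variable {V : Type} {G : WDigraph V}

lemma walk_append_iff {a b : List (V × V)} : ∀ {u v : V}, IsWalkFrom G u v (a ++ b) ↔
    ∃ x, IsWalkFrom G u x a ∧ IsWalkFrom G x v b := by
  induction a with
  | nil => intro u v; simp [IsWalkFrom]
  | cons e a IH =>
    intro u v
    simp only [List.cons_append, IsWalkFrom, IH]
    tauto

lemma walk_mem {l : List (V × V)} : ∀ {u v : V}, IsWalkFrom G u v l → ∀ e ∈ l, e ∈ G.edges := by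
  induction l with
  | nil => simp
  | cons f l IH =>
    intro u v h e he
    rcases List.mem_cons.1 he with rfl | he
    · exact h.1
    · exact IH h.2.2 e he

lemma walk_sub {E : Finset (V × V)} {l : List (V × V)} : ∀ {u v : V}, IsWalkFrom G u v l →
    (∀ e ∈ l, e ∈ E) → IsWalkFrom (G.sub E) u v l := by
  induction l with
  | nil => intro u v h _; exact h
  | cons f l IH =>
    intro u v h he
    exact ⟨he f (by simp), h.2.1, IH h.2.2 fun e h' => he e (by simp [h'])⟩

lemma dist_le_of_walk {u v : V} {l : List (V × V)} (h : IsWalkFrom G u v l) :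
    G.dist u v ≤ walkWeight G l := iInf₂_le l h

lemma sum_w_nonneg (hG : G.Nonneg) (l : List (V × V)) : 0 ≤ (l.map G.w).sum :=
  List.sum_nonneg fun x hx => by
    obtain ⟨e, -, rfl⟩ := List.mem_map.1 hx
    exact hG e

lemma walkWeight_append (hG : G.Nonneg) (a b : List (V × V)) :
    walkWeight G (a ++ b) = walkWeight G a + walkWeight G b := by
  simp only [walkWeight, List.map_append, List.sum_append]
  exact ENNReal.ofReal_add (sum_w_nonneg hG a) (sum_w_nonneg hG b)

/-- Cutting out the cycles of a walk. -/
lemma exists_simple (l : List (V × V)) : ∀ {u v : V}, IsWalkFrom G u v l →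
    ∃ l', IsWalkFrom G u v l' ∧ (l'.map Prod.fst).Nodup ∧ l'.Sublist l := by
  induction l with
  | nil => intro u v h; exact ⟨[], h, by simp, by simp⟩
  | cons e t IH =>
    rintro u v ⟨h1, rfl, h3⟩
    obtain ⟨t', w, nd, sb⟩ := IH h3
    by_cases hm : e.1 ∈ t'.map Prod.fst
    · obtain ⟨f, hf, hfe⟩ := List.mem_map.1 hm
      obtain ⟨a, b, rfl⟩ := List.append_of_mem hf
      obtain ⟨x, -, hb⟩ := walk_append_iff.1 w
      have hx : x = e.1 := by rw [← hb.2.1, hfe]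
      refine ⟨f :: b, hx ▸ hb, ?_, ?_⟩
      · rw [List.map_append] at nd
        exact (List.nodup_append.1 nd).2.1
      · exact ((List.sublist_append_right a (f :: b)).trans sb).trans (List.sublist_cons_self _ _)
    · refine ⟨e :: t', ⟨h1, rfl, w⟩, ?_, sb.cons_cons e⟩
      rw [List.map_cons, List.nodup_cons]
      exact ⟨hm, nd⟩

lemma walkWeight_sublist (hG : G.Nonneg) {a b : List (V × V)} (h : a.Sublist b) :
    walkWeight G a ≤ walkWeight G b := by
  apply ENNReal.ofReal_le_ofReal
  refine List.Sublist.sum_le_sum (h.map G.w) ?_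
  intro x hx
  obtain ⟨e, -, rfl⟩ := List.mem_map.1 hx
  exact hG e

/-- `l` is a shortest walk from `u` to `v`, and visits no vertex twice. -/
def IsGeo (G : WDigraph V) (u v : V) (l : List (V × V)) : Prop :=
  IsWalkFrom G u v l ∧ (l.map Prod.fst).Nodup ∧ walkWeight G l ≤ G.dist u v

lemma IsGeo.length_le [Fintype V] {u v : V} {l : List (V × V)} (h : IsGeo G u v l) :
    l.length ≤ Fintype.card V := by
  simpa using h.2.1.length_le_card

lemma exists_geo [Fintype V] (hG : G.Nonneg) {u v : V} (h : G.Reachable u v) :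
    ∃ l, IsGeo G u v l := by
  classical
  have hfin : {l : List (V × V) | IsWalkFrom G u v l ∧ (l.map Prod.fst).Nodup}.Finite := by
    refine (List.finite_length_le (V × V) (Fintype.card V)).subset ?_
    rintro l ⟨-, hl⟩
    have := hl.length_le_card
    simpa using this
  obtain ⟨l0, hl0⟩ := h
  obtain ⟨l1, hl1, hn1, -⟩ := exists_simple l0 hl0
  obtain ⟨l, hl, hmin⟩ := Set.exists_min_image _ (walkWeight G) hfin ⟨l1, hl1, hn1⟩
  refine ⟨l, hl.1, hl.2, le_iInf₂ fun l' hl' => ?_⟩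
  obtain ⟨l2, hl2, hn2, hs⟩ := exists_simple l' hl'
  exact (hmin l2 ⟨hl2, hn2⟩).trans (walkWeight_sublist hG hs)

lemma dist_eq_top_of_not_reachable {u v : V} (h : ¬ G.Reachable u v) : G.dist u v = ⊤ := by
  simp only [WDigraph.dist, iInf_eq_top]
  exact fun l hl => absurd ⟨l, hl⟩ h

lemma dist_ne_top {u v : V} (h : G.Reachable u v) : G.dist u v ≠ ⊤ := by
  obtain ⟨l, hl⟩ := h
  exact ((dist_le_of_walk hl).trans_lt ENNReal.ofReal_lt_top).ne

lemma dist_self' (u : V) : G.dist u u = 0 := by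
  have : G.dist u u ≤ walkWeight G [] := dist_le_of_walk (by simp [IsWalkFrom])
  simpa [walkWeight] using this

lemma dist_tri [Fintype V] (hG : G.Nonneg) (x y z : V) :
    G.dist x z ≤ G.dist x y + G.dist y z := by
  by_cases h1 : G.Reachable x y
  swap
  · simp [dist_eq_top_of_not_reachable h1]
  by_cases h2 : G.Reachable y z
  swap
  · simp [dist_eq_top_of_not_reachable h2]
  obtain ⟨a, ha, -, ha'⟩ := exists_geo hG h1
  obtain ⟨b, hb, -, hb'⟩ := exists_geo hG h2
  calc _ ≤ walkWeight G (a ++ b) := dist_le_of_walk (walk_append_iff.2 ⟨y, ha, hb⟩)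
    _ = _ := walkWeight_append hG a b
    _ ≤ _ := add_le_add ha' hb'

lemma walk_reverse (hS : G.Symmetric) (l : List (V × V)) : ∀ {u v : V}, IsWalkFrom G u v l →
    ∃ l', IsWalkFrom G v u l' ∧ walkWeight G l' = walkWeight G l := by
  have key : ∀ {u v : V}, IsWalkFrom G u v l →
      ∃ l', IsWalkFrom G v u l' ∧ (l'.map G.w).sum = (l.map G.w).sum := by
    induction l with
    | nil => intro u v h; exact ⟨[], h.symm, rfl⟩
    | cons e t IH =>
      rintro u v ⟨h1, rfl, h3⟩
      obtain ⟨t', w, hw⟩ := IH h3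
      refine ⟨t' ++ [(e.2, e.1)], walk_append_iff.2 ⟨e.2, w, (hS e h1).1, rfl, rfl⟩, ?_⟩
      simp [hw, (hS e h1).2, add_comm]
  intro u v h
  obtain ⟨l', h1, h2⟩ := key h
  exact ⟨l', h1, by rw [walkWeight, walkWeight, h2]⟩

lemma dist_symm (hS : G.Symmetric) (u v : V) : G.dist u v = G.dist v u := by
  have key : ∀ u v : V, G.dist u v ≤ G.dist v u := fun u v => le_iInf₂ fun l hl => by
    obtain ⟨l', h1, h2⟩ := walk_reverse hS l hl
    exact (dist_le_of_walk h1).trans h2.le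
  exact le_antisymm (key u v) (key v u)

lemma dist_sub_le_of_walk {E : Finset (V × V)} {u v : V} {l : List (V × V)}
    (h : IsWalkFrom G u v l) (hE : ∀ e ∈ l, e ∈ E) : (G.sub E).dist u v ≤ walkWeight G l :=
  dist_le_of_walk (walk_sub h hE)

/-- The middle part of a shortest walk is a shortest walk. -/
lemma IsGeo.middle (hG : G.Nonneg) {u v x y : V} {a b c : List (V × V)}
    (h : IsGeo G u v (a ++ (b ++ c))) (ha : IsWalkFrom G u x a) (_hb : IsWalkFrom G x y b)
    (hc : IsWalkFrom G y v c) : walkWeight G b ≤ G.dist x y := by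
  refine le_iInf₂ fun b' hb' => ?_
  have h1 : G.dist u v ≤ walkWeight G (a ++ (b' ++ c)) :=
    dist_le_of_walk (walk_append_iff.2 ⟨x, ha, walk_append_iff.2 ⟨y, hb', hc⟩⟩)
  have h2 := h.2.2.trans h1
  rw [walkWeight_append hG, walkWeight_append hG, walkWeight_append hG,
    walkWeight_append hG] at h2
  have h3 := (ENNReal.add_le_add_iff_left (show walkWeight G a ≠ ⊤ from ENNReal.ofReal_ne_top)).1 h2
  exact (ENNReal.add_le_add_iff_right (show walkWeight G c ≠ ⊤ from ENNReal.ofReal_ne_top)).1 h3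

/-- The `i`-th vertex of a walk ending in `v`; it is `v` if `i` is at least the length. -/
def vtx (l : List (V × V)) (v : V) (i : ℕ) : V := (l.map Prod.fst).getD i v

lemma walk_take (l : List (V × V)) : ∀ {u v : V}, IsWalkFrom G u v l → ∀ i,
    IsWalkFrom G u (vtx l v i) (l.take i) ∧ IsWalkFrom G (vtx l v i) v (l.drop i) := by
  induction l with
  | nil => intro u v h i; simpa [vtx, IsWalkFrom] using h
  | cons e t IH =>
    rintro u v ⟨h1, rfl, h3⟩ i
    cases i with
    | zero => exact ⟨by simp [IsWalkFrom, vtx], ⟨h1, by simp [vtx], h3⟩⟩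
    | succ i =>
      have := IH h3 i
      have e1 : vtx (e :: t) v (i + 1) = vtx t v i := by simp [vtx]
      rw [e1]
      exact ⟨⟨h1, rfl, this.1⟩, this.2⟩

lemma vtx_drop (l : List (V × V)) (v : V) (i j : ℕ) : vtx (l.drop i) v j = vtx l v (i + j) := by
  simp [vtx, List.getD_eq_getElem?_getD, List.getElem?_drop]

/-- The weight of the first `i` edges of `l`. -/
noncomputable def pre (G : WDigraph V) (l : List (V × V)) (i : ℕ) : ℝ := ((l.take i).map G.w).sum

/-- The part of a shortest walk between its `i`-th and its `j`-th vertex. -/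
lemma IsGeo.segment (hG : G.Nonneg) {u v : V} {l : List (V × V)} (h : IsGeo G u v l) {i j : ℕ}
    (hij : i ≤ j) :
    IsWalkFrom G (vtx l v i) (vtx l v j) ((l.drop i).take (j - i)) ∧
    walkWeight G ((l.drop i).take (j - i)) ≤ G.dist (vtx l v i) (vtx l v j) ∧
    walkWeight G ((l.drop i).take (j - i)) = ENNReal.ofReal (pre G l j - pre G l i) ∧
    pre G l i ≤ pre G l j := by
  have h1 := walk_take l h.1 i
  have h2 := walk_take _ h1.2 (j - i)
  rw [vtx_drop, show i + (j - i) = j by omega] at h2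
  have hs : pre G l j = pre G l i + (((l.drop i).take (j - i)).map G.w).sum := by
    rw [pre, pre, ← List.sum_append, ← List.map_append, ← List.take_add,
      show i + (j - i) = j by omega]
  refine ⟨h2.1, ?_, ?_, ?_⟩
  · refine IsGeo.middle hG (a := l.take i) (c := (l.drop i).drop (j - i)) ?_ h1.1 h2.1 h2.2
    rw [List.take_append_drop, List.take_append_drop]
    exact h
  · rw [walkWeight, hs]; congr 1; ring
  · rw [hs]; have := sum_w_nonneg hG ((l.drop i).take (j - i)); linarith

/-- The distance of `a` and `b` is attained by a walk with at most `L` edges. -/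
def Short (G : WDigraph V) (L : ℕ) (a b : V) : Prop :=
  ∃ l, IsWalkFrom G a b l ∧ l.length ≤ L ∧ walkWeight G l ≤ G.dist a b

/-- Between any two connected vertices there is a shortest walk that meets `B` in each of its
consecutive blocks of `ℓ` vertices. -/
def Hits (G : WDigraph V) (ℓ : ℕ) (B : Finset V) : Prop :=
  ∀ u v, G.Reachable u v → ∃ l, IsGeo G u v l ∧
    ∀ c, (c + 1) * ℓ ≤ l.length → ∃ j, c * ℓ ≤ j ∧ j < (c + 1) * ℓ ∧ vtx l v j ∈ B

lemma hits_univ [Fintype V] (hG : G.Nonneg) : Hits G 1 Finset.univ := by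
  intro u v h
  obtain ⟨l, hl⟩ := exists_geo hG h
  exact ⟨l, hl, fun c _ => ⟨c, by omega, by omega, Finset.mem_univ _⟩⟩

/-- About `n / ℓ` vertices suffice to hit one shortest walk per pair: each such walk has at most `n`
blocks, so only `n ^ 3` sets have to be hit. -/
lemma exists_hits [Fintype V] [DecidableEq V] (hG : G.Nonneg) (ℓ : ℕ) (hℓ : 1 ≤ ℓ) :
    ∃ B : Finset V, Hits G ℓ B ∧
      (B.card : ℝ) ≤ Fintype.card V / ℓ * (1 + 3 * Real.log (Fintype.card V)) := by
  have hgeo : ∀ p : V × V, ∃ l, G.Reachable p.1 p.2 → IsGeo G p.1 p.2 l := by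
    intro p
    by_cases h : G.Reachable p.1 p.2
    · obtain ⟨l, hl⟩ := exists_geo hG h
      exact ⟨l, fun _ => hl⟩
    · exact ⟨[], fun h' => absurd h' h⟩
  choose g hg using hgeo
  let blk : (V × V) × ℕ → Finset V := fun q =>
    ((((g q.1).drop (q.2 * ℓ)).take ℓ).map Prod.fst).toFinset
  let F : Finset (Finset V) :=
    (((Finset.univ : Finset (V × V)) ×ˢ Finset.range (Fintype.card V)).image blk).filter
      (fun S => ℓ ≤ S.card)
  obtain ⟨B, -, hB, hBc⟩ := hitting_set Finset.univ F ℓ hℓ (fun S hS =>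
    ⟨Finset.subset_univ _, (Finset.mem_filter.1 hS).2⟩)
  refine ⟨B, ?_, ?_⟩
  · intro u v h
    have hl := hg (u, v) h
    refine ⟨g (u, v), hl, fun c hc => ?_⟩
    have hlen : (((g (u, v)).drop (c * ℓ)).take ℓ).length = ℓ := by
      rw [List.length_take, List.length_drop]
      have : (c + 1) * ℓ = c * ℓ + ℓ := by ring
      omega
    have hnd : ((((g (u, v)).drop (c * ℓ)).take ℓ).map Prod.fst).Nodup := by
      refine List.Nodup.sublist ?_ hl.2.1
      exact (((List.take_sublist _ _).trans (List.drop_sublist _ _)).map Prod.fst)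
    have hcard : (blk ((u, v), c)).card = ℓ := by
      simp only [blk]
      rw [List.toFinset_card_of_nodup hnd, List.length_map, hlen]
    have hcn : c < Fintype.card V := by
      have := hl.length_le
      have : c + 1 ≤ (c + 1) * ℓ := Nat.le_mul_of_pos_right _ hℓ
      omega
    obtain ⟨x, hx, hxB⟩ := hB (blk ((u, v), c)) (Finset.mem_filter.2
      ⟨Finset.mem_image_of_mem _ (Finset.mem_product.2 ⟨Finset.mem_univ _, Finset.mem_range.2 hcn⟩),
        hcard.ge⟩)
    simp only [blk, List.mem_toFinset] at hx
    obtain ⟨i, hi, rfl⟩ := List.mem_iff_getElem.1 hx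
    rw [List.length_map, hlen] at hi
    refine ⟨c * ℓ + i, by omega, by rw [add_mul, one_mul]; omega, ?_⟩
    have : vtx (g (u, v)) v (c * ℓ + i) =
        ((((g (u, v)).drop (c * ℓ)).take ℓ).map Prod.fst)[i]'(by
          rw [List.length_map, hlen]; exact hi) := by
      have hlt : c * ℓ + i < (g (u, v)).length := by
        have : (c + 1) * ℓ = c * ℓ + ℓ := by ring
        omega
      simp [vtx, List.getD_eq_getElem?_getD, hlt]
    rw [this]; exact hxB
  · refine hBc.trans ?_
    rw [Finset.card_univ]
    have hF : F.card ≤ Fintype.card V ^ 3 := by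
      refine (Finset.card_filter_le _ _).trans (Finset.card_image_le.trans ?_)
      rw [Finset.card_product, Finset.card_univ, Fintype.card_prod, Finset.card_range]
      exact le_of_eq (by ring)
    have hlog : Real.log F.card ≤ 3 * Real.log (Fintype.card V) := by
      rcases Nat.eq_zero_or_pos F.card with h0 | h0
      · rw [h0]
        have := Real.log_natCast_nonneg (Fintype.card V)
        simp only [Nat.cast_zero, Real.log_zero]; positivity
      · have h0' : (0 : ℝ) < F.card := by exact_mod_cast h0
        have : (F.card : ℝ) ≤ (Fintype.card V : ℝ) ^ 3 := by exact_mod_cast hF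
        calc _ ≤ Real.log ((Fintype.card V : ℝ) ^ 3) := Real.log_le_log h0' this
          _ = _ := by rw [Real.log_pow]; norm_num
    gcongr

end Walks

end Hopsets

/-! ### Realizing pairs in the graph -/

namespace Hopsets

section Realize

variable {V : Type} {G : WDigraph V}

/-- Property of `H` provided by `exists_hopset` with `A0 = B` and `m` levels, for the accuracy
parameter `r`: paths through points of `B` have shortcuts with `(6 * r) ^ m` steps. -/
def IsHop (d : V → V → ℝ≥0∞) (B : Finset V) (H : Finset (V × V)) (m r : ℕ) : Prop :=
  ∀ (x : ℕ → V) (L : ℕ → ℝ) (R : V → V → Prop), Monotone L → (∀ c, x c ∈ B) →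
    (∀ a b, a ≤ b → d (x a) (x b) ≤ ENNReal.ofReal (L b - L a)) →
    (∀ e ∈ H, R e.1 e.2) → (∀ c, R (x c) (x (c + 1))) →
    ∀ a b, a ≤ b → Hop d R ((6 * r) ^ m) (x a) (x b) ((1 + m * (8 / r)) * (L b - L a))

/-- A hopset on a set `B` hitting all blocks of `ℓ` vertices, together with the shortest walks with
at most `2 * ℓ` edges, gives shortcuts for all pairs of vertices. -/
lemma hop_all (hG : G.Nonneg) {ℓ : ℕ} (hℓ : 1 ≤ ℓ) {B : Finset V} (hB : Hits G ℓ B)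
    {H : Finset (V × V)} {m r : ℕ} (hH : IsHop G.dist B H m r) {u v : V} (h : G.Reachable u v) :
    Hop G.dist (fun a b => (a, b) ∈ H ∨ Short G (2 * ℓ) a b) ((6 * r) ^ m + 2) u v
      ((1 + m * (8 / r)) * (G.dist u v).toReal) := by
  obtain ⟨l, hl, hblk⟩ := hB u v h
  have htop := dist_ne_top h
  have hfac : (0 : ℝ) ≤ m * (8 / r) := by positivity
  have hD : (0 : ℝ) ≤ (G.dist u v).toReal := ENNReal.toReal_nonneg
  rcases Nat.eq_zero_or_pos (l.length / ℓ) with hq | hq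
  · have hlen : l.length < ℓ := by
      rcases Nat.div_eq_zero_iff.1 hq with h0 | h0 <;> omega
    have : Hop G.dist (fun a b => (a, b) ∈ H ∨ Short G (2 * ℓ) a b) 1 u v
        (G.dist u v).toReal :=
      Hop.single (Or.inr ⟨l, hl.1, by omega, hl.2.2⟩) (by rw [ENNReal.ofReal_toReal htop])
    exact this.mono (by omega) (by nlinarith)
  obtain ⟨q, hq'⟩ : ∃ q, l.length / ℓ = q + 1 := ⟨l.length / ℓ - 1, by omega⟩
  have hq1 : (q + 1) * ℓ ≤ l.length := by rw [← hq']; exact Nat.div_mul_le_self _ _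
  have hq2 : l.length < (q + 2) * ℓ := by
    have := Nat.lt_mul_div_succ l.length (show 0 < ℓ by omega)
    rw [hq'] at this; linarith
  -- `φ c` is the position of a point of `B` in the `c`-th block; it is constant from `q` on, since
  -- `IsHop` speaks of infinite sequences. Consecutive positions differ by at most `2 * ℓ`.
  have hj : ∀ c, ∃ j, c ≤ q → c * ℓ ≤ j ∧ j < (c + 1) * ℓ ∧ vtx l v j ∈ B := by
    intro c
    by_cases hc : c ≤ q
    · obtain ⟨j, hj⟩ := hblk c (le_trans (Nat.mul_le_mul_right _ (by omega)) hq1)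
      exact ⟨j, fun _ => hj⟩
    · exact ⟨0, fun h => absurd h hc⟩
  choose j hj using hj
  let φ : ℕ → ℕ := fun c => j (min c q)
  have hφ1 : ∀ c, min c q * ℓ ≤ φ c ∧ φ c < (min c q + 1) * ℓ ∧ vtx l v (φ c) ∈ B :=
    fun c => hj _ (min_le_right _ _)
  have hstep : ∀ c, φ c ≤ φ (c + 1) ∧ φ (c + 1) ≤ φ c + 2 * ℓ := by
    intro c
    rcases le_or_gt q c with hc | hc
    · have : φ (c + 1) = φ c := by
        simp only [φ]; rw [min_eq_right hc, min_eq_right (by omega)]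
      omega
    · have h1 := hφ1 c
      have h2 := hφ1 (c + 1)
      rw [min_eq_left hc.le] at h1
      rw [min_eq_left (show c + 1 ≤ q from hc)] at h2
      have : (c + 1 + 1) * ℓ = c * ℓ + 2 * ℓ := by ring
      omega
  have hmono : Monotone φ := monotone_nat_of_le_succ fun c => (hstep c).1
  have hLmono : Monotone (fun c => pre G l (φ c)) := fun a b hab =>
    (hl.segment hG (hmono hab)).2.2.2
  have hseg : ∀ a b, a ≤ b → b ≤ a + 2 * ℓ → Short G (2 * ℓ) (vtx l v a) (vtx l v b) ∧
      Hop G.dist (fun a b => (a, b) ∈ H ∨ Short G (2 * ℓ) a b) 1 (vtx l v a) (vtx l v b)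
        (pre G l b - pre G l a) := by
    intro a b hab hb
    obtain ⟨s1, s2, s3, s4⟩ := hl.segment hG hab
    have hsh : Short G (2 * ℓ) (vtx l v a) (vtx l v b) :=
      ⟨_, s1, by rw [List.length_take]; omega, s2⟩
    exact ⟨hsh, Hop.single (Or.inr hsh) ((dist_le_of_walk s1).trans s3.le)⟩
  have hmid := hH (fun c => vtx l v (φ c)) (fun c => pre G l (φ c))
    (fun a b => (a, b) ∈ H ∨ Short G (2 * ℓ) a b) hLmono (fun c => (hφ1 c).2.2)
    (fun a b hab => by
      obtain ⟨s1, s2, s3, s4⟩ := hl.segment hG (hmono hab)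
      exact (dist_le_of_walk s1).trans s3.le)
    (fun e he => Or.inl he)
    (fun c => Or.inr (hseg _ _ (hstep c).1 (hstep c).2).1) 0 q (Nat.zero_le _)
  have hp0 := hφ1 0
  have hpq := hφ1 q
  rw [Nat.zero_min] at hp0
  rw [min_self] at hpq
  have hle : φ q ≤ l.length := by omega
  have hfirst := (hseg 0 (φ 0) (Nat.zero_le _) (by omega)).2
  have hlast := (hseg (φ q) l.length hle (by
    have : (q + 2) * ℓ = q * ℓ + 2 * ℓ := by ring
    omega)).2
  have hu : vtx l v 0 = u := by
    cases l with
    | nil => simpa [vtx] using hl.1.symm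
    | cons e t => simpa [vtx] using hl.1.2.1
  have hv : vtx l v l.length = v := by simp [vtx]
  rw [hu] at hfirst
  rw [hv] at hlast
  have w0 : pre G l 0 = 0 := by simp [pre]
  have wl : pre G l l.length ≤ (G.dist u v).toReal := by
    have h1 := ENNReal.toReal_mono htop hl.2.2
    rw [walkWeight, ENNReal.toReal_ofReal (sum_w_nonneg hG l)] at h1
    simpa [pre] using h1
  have m1 := (hl.segment hG (Nat.zero_le (φ 0))).2.2.2
  have m2 := (hl.segment hG (hmono (Nat.zero_le q))).2.2.2
  have m3 := (hl.segment hG hle).2.2.2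
  have p2 : 0 ≤ (1 + (m : ℝ) * (8 / r)) * (pre G l (φ q) - pre G l (φ 0)) :=
    mul_nonneg (by linarith) (by linarith)
  refine ((hfirst.trans hmid (by linarith) p2).trans hlast (by linarith) (by linarith)).mono
    (by omega) ?_
  rw [w0] at *
  set τ : ℝ := (m : ℝ) * (8 / r)
  have : τ * (pre G l (φ q) - pre G l (φ 0)) ≤ τ * (G.dist u v).toReal :=
    mul_le_mul_of_nonneg_left (by linarith) hfac
  linarith

/-- With at most `c` edges of `G` one can make sure that the distance of each pair in `P` is
stretched by a factor of at most `s`. -/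
def Realizable (G : WDigraph V) (P : Finset (V × V)) (c s : ℝ) : Prop :=
  ∃ E0 ⊆ G.edges, (E0.card : ℝ) ≤ c ∧ ∀ E, E0 ⊆ E →
    ∀ p ∈ P, (G.sub E).dist p.1 p.2 ≤ ENNReal.ofReal s * G.dist p.1 p.2

lemma Realizable.mono {P : Finset (V × V)} {c s c' s' : ℝ} (h : Realizable G P c s) (hc : c ≤ c')
    (hs : s ≤ s') : Realizable G P c' s' := by
  obtain ⟨E0, h1, h2, h3⟩ := h
  refine ⟨E0, h1, h2.trans hc, fun E hE p hp => (h3 E hE p hp).trans ?_⟩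
  gcongr

/-- A shortest walk for each pair. -/
lemma realizable_direct [Fintype V] (hG : G.Nonneg) (P : Finset (V × V)) :
    Realizable G P (P.card * Fintype.card V) 1 := by
  classical
  have hgeo : ∀ p : V × V, ∃ l, (∀ e ∈ l, e ∈ G.edges) ∧ l.length ≤ Fintype.card V ∧
      (G.Reachable p.1 p.2 → IsGeo G p.1 p.2 l) := by
    intro p
    by_cases h : G.Reachable p.1 p.2
    · obtain ⟨l, hl⟩ := exists_geo hG h
      exact ⟨l, walk_mem hl.1, hl.length_le, fun _ => hl⟩
    · exact ⟨[], by simp, by simp, fun h' => absurd h' h⟩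
  choose g hg1 hg2 hg3 using hgeo
  refine ⟨P.biUnion fun p => (g p).toFinset, ?_, ?_, ?_⟩
  · intro e he
    obtain ⟨p, -, hp⟩ := Finset.mem_biUnion.1 he
    exact hg1 p e (List.mem_toFinset.1 hp)
  · have : (P.biUnion fun p => (g p).toFinset).card ≤ P.card * Fintype.card V :=
      Finset.card_biUnion_le_card_mul _ _ _ fun p _ =>
        (List.toFinset_card_le _).trans (hg2 p)
    exact_mod_cast this
  · intro E hE p hp
    by_cases h : G.Reachable p.1 p.2
    · rw [ENNReal.ofReal_one, one_mul]
      refine (dist_sub_le_of_walk (hg3 p h).1 fun e he => hE ?_).trans (hg3 p h).2.2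
      exact Finset.mem_biUnion.2 ⟨p, hp, List.mem_toFinset.2 he⟩
    · simp [dist_eq_top_of_not_reachable h]

/-- The pairs of `P` are realized through the pairs of a hopset `H` and short walks. -/
lemma realizable_step [Fintype V] (hG : G.Nonneg) {ℓ : ℕ} (hℓ : 1 ≤ ℓ) {B : Finset V}
    (hB : Hits G ℓ B) {H : Finset (V × V)} {m r : ℕ} (hH : IsHop G.dist B H m r) {c s : ℝ}
    (hs : 1 ≤ s) (hr : Realizable G H c s) (P : Finset (V × V)) :
    Realizable G P (P.card * (((6 * r) ^ m + 2) * (2 * ℓ)) + c) (s * (1 + m * (8 / r))) := by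
  classical
  obtain ⟨E1, hE1, hE1c, hE1d⟩ := hr
  have hsw : ∀ e : V × V, ∃ l, (∀ e ∈ l, e ∈ G.edges) ∧ l.length ≤ 2 * ℓ ∧
      (Short G (2 * ℓ) e.1 e.2 → IsWalkFrom G e.1 e.2 l ∧ walkWeight G l ≤ G.dist e.1 e.2) := by
    intro e
    by_cases h : Short G (2 * ℓ) e.1 e.2
    · obtain ⟨l, h1, h2, h3⟩ := h
      exact ⟨l, walk_mem h1, h2, fun _ => ⟨h1, h3⟩⟩
    · exact ⟨[], by simp, by simp, fun h' => absurd h' h⟩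
  choose g hg1 hg2 hg3 using hsw
  have hS : ∀ p : V × V, ∃ S : Finset (V × V), S.card ≤ (6 * r) ^ m + 2 ∧
      (G.Reachable p.1 p.2 → (∀ e ∈ S, e ∈ H ∨ Short G (2 * ℓ) e.1 e.2) ∧
        ∀ (d' : V → V → ℝ≥0∞) (η α : ℝ≥0∞), (∀ x, d' x x = 0) →
        (∀ x y z, d' x z ≤ d' x y + d' y z) →
        (∀ e ∈ S, d' e.1 e.2 ≤ η * G.dist e.1 e.2 + α) →
        d' p.1 p.2 ≤ η * ENNReal.ofReal ((1 + m * (8 / r)) * (G.dist p.1 p.2).toReal) +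
          ((6 * r) ^ m + 2 : ℕ) * α) := by
    intro p
    by_cases h : G.Reachable p.1 p.2
    · obtain ⟨S, h1, h2, h3⟩ := hop_all hG hℓ hB hH h
      exact ⟨S, h1, fun _ => ⟨h2, h3⟩⟩
    · exact ⟨∅, by simp, fun h' => absurd h' h⟩
  choose S hS1 hS2 using hS
  let E2 := P.biUnion fun p => (S p).biUnion fun e => (g e).toFinset
  refine ⟨E2 ∪ E1, ?_, ?_, ?_⟩
  · refine Finset.union_subset ?_ hE1
    intro e he
    obtain ⟨p, -, hp⟩ := Finset.mem_biUnion.1 he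
    obtain ⟨f, -, hf⟩ := Finset.mem_biUnion.1 hp
    exact hg1 f e (List.mem_toFinset.1 hf)
  · have h1 : E2.card ≤ P.card * (((6 * r) ^ m + 2) * (2 * ℓ)) := by
      refine Finset.card_biUnion_le_card_mul _ _ _ fun p _ => ?_
      refine (Finset.card_biUnion_le_card_mul _ _ (2 * ℓ) fun e _ =>
        (List.toFinset_card_le _).trans (hg2 e)).trans ?_
      exact Nat.mul_le_mul_right _ (hS1 p)
    have h1' : (E2.card : ℝ) ≤ P.card * (((6 * r) ^ m + 2) * (2 * ℓ)) := by exact_mod_cast h1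
    have h2 : ((E2 ∪ E1).card : ℝ) ≤ E2.card + E1.card := by
      exact_mod_cast Finset.card_union_le _ _
    linarith
  · intro E hE p hp
    by_cases h : G.Reachable p.1 p.2
    swap
    · rw [dist_eq_top_of_not_reachable h, ENNReal.mul_top]
      · exact le_top
      · have : 0 < s * (1 + m * (8 / r)) := by positivity
        simpa using this
    obtain ⟨t1, t2⟩ := hS2 p h
    have hGE : (G.sub E).Nonneg := hG
    have := t2 (G.sub E).dist (ENNReal.ofReal s) 0 dist_self' (dist_tri hGE) (by
      intro e he
      rw [add_zero]
      rcases t1 e he with h1 | h1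
      · exact hE1d E (Finset.union_subset_right hE) e h1
      · obtain ⟨w1, w2⟩ := hg3 e h1
        refine (dist_sub_le_of_walk w1 fun f hf => hE (Finset.mem_union_left _ ?_)).trans ?_
        · exact Finset.mem_biUnion.2 ⟨p, hp, Finset.mem_biUnion.2 ⟨e, he, List.mem_toFinset.2 hf⟩⟩
        · refine w2.trans (le_mul_of_one_le_left' ?_)
          rwa [ENNReal.one_le_ofReal])
    refine this.trans (le_of_eq ?_)
    rw [mul_zero, add_zero, ENNReal.ofReal_mul (by positivity), ENNReal.ofReal_mul (by positivity),
      ENNReal.ofReal_toReal (dist_ne_top h), mul_assoc]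

end Realize

end Hopsets

/-! ### Iterated realization -/

namespace Hopsets

section Iterate

variable {V : Type} {G : WDigraph V}

/-- `exists_hopset` with `X = 2 * N ^ (1 + 1 / (2 ^ (m + 1) - 1))`. -/
lemma hopset_of_card [Fintype V] (hG : G.Nonneg) (hS : G.Symmetric) (B : Finset V) {N lam : ℝ}
    (hN : (B.card : ℝ) ≤ N) (hN1 : 1 ≤ N) (hlam : 1 + Real.log (Fintype.card V) ≤ lam) (m : ℕ) :
    ∃ H : Finset (V × V),
      (H.card : ℝ) ≤ 12 * (m + 1) * lam * N ^ (1 + 1 / (2 ^ (m + 1) - 1 : ℝ)) ∧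
      (∀ r : ℕ, 6 ≤ r → IsHop G.dist B H m r) ∧
      (∀ (d' : V → V → ℝ≥0∞) (η : ℝ≥0∞), (∀ x y z, d' x z ≤ d' x y + d' y z) →
        (∀ e ∈ H, d' e.1 e.2 ≤ η * G.dist e.1 e.2) →
        ∀ u ∈ B, ∀ v ∈ B, d' u v ≤ η * (5 ^ m * G.dist u v)) := by
  classical
  have hM : (2 : ℝ) ≤ 2 ^ (m + 1) := by
    rw [pow_succ]
    have : (1 : ℝ) ≤ 2 ^ m := one_le_pow₀ (by norm_num)
    linarith
  set M : ℝ := 2 ^ (m + 1) with hMdef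
  set δ : ℝ := 1 / (M - 1) with hδ
  have hδ0 : 0 < δ := by have : 0 < M - 1 := by linarith
                         positivity
  have hN0 : 0 < N := by linarith
  have hNδ : 1 ≤ N ^ δ := Real.one_le_rpow hN1 hδ0.le
  have hXe : N ^ (1 + δ) = N * N ^ δ := by rw [Real.rpow_add hN0, Real.rpow_one]
  obtain ⟨H, h1, h2, h3⟩ := exists_hopset G.dist (dist_tri hG) (dist_symm hS) B
    (X := 2 * N ^ (1 + δ)) hN hN0 (by rw [hXe]; nlinarith) hlam (m := m) (by
      have e1 : N / (2 * N ^ (1 + δ)) = N ^ (-δ) / 2 := by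
        rw [hXe, Real.rpow_neg hN0.le]
        have : N ^ δ ≠ 0 := by positivity
        field_simp
      have e2 : (N ^ (-δ)) ^ (2 ^ (m + 1)) = N ^ (-δ * M) := by
        rw [← Real.rpow_natCast, ← Real.rpow_mul hN0.le, hMdef]
        push_cast; rfl
      have e3 : N ^ (1 + δ) * N ^ (-δ * M) = 1 := by
        rw [← Real.rpow_add hN0]
        have : 1 + δ + -δ * M = 0 := by
          rw [hδ]
          have : M - 1 ≠ 0 := by linarith
          field_simp
          ring
        rw [this, Real.rpow_zero]
      rw [e1, div_pow, e2]
      have e4 : 2 * N ^ (1 + δ) * (N ^ (-δ * M) / 2 ^ 2 ^ (m + 1)) =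
          (N ^ (1 + δ) * N ^ (-δ * M)) * (2 / 2 ^ 2 ^ (m + 1)) := by ring
      rw [e4, e3, one_mul, div_lt_one (by positivity)]
      have : 1 < 2 ^ (m + 1) := Nat.one_lt_two_pow (by omega)
      calc (2 : ℝ) = 2 ^ 1 := by norm_num
        _ < 2 ^ 2 ^ (m + 1) := pow_lt_pow_right₀ (by norm_num) this)
  refine ⟨H, h1.trans (le_of_eq (by ring)), ?_, h3⟩
  intro r hr x L R a1 a2 a3 a4 a5
  exact h2 x L R a1 a2 a3 a4 a5 r hr

lemma exists_accuracy {m : ℕ} (hm : 1 ≤ m) {ε : ℝ} (h0 : 0 < ε) (h1 : ε < 1) :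
    ∃ r : ℕ, 6 ≤ r ∧ (m : ℝ) * (8 / r) ≤ ε ∧ (6 * r : ℝ) ≤ 54 * m / ε := by
  have hm' : (1 : ℝ) ≤ m := by exact_mod_cast hm
  have hx : 1 ≤ m / ε := by rw [le_div_iff₀ h0]; linarith
  have hr1 : 8 * (m / ε) ≤ ⌈8 * (m / ε)⌉₊ := Nat.le_ceil _
  have hr2 : (⌈8 * (m / ε)⌉₊ : ℝ) < 8 * (m / ε) + 1 := Nat.ceil_lt_add_one (by positivity)
  refine ⟨⌈8 * (m / ε)⌉₊, ?_, ?_, ?_⟩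
  · have : (6 : ℝ) ≤ ⌈8 * (m / ε)⌉₊ := by linarith
    exact_mod_cast this
  · have hpos : (0 : ℝ) < ⌈8 * (m / ε)⌉₊ := by linarith
    rw [mul_div_assoc', div_le_iff₀ hpos]
    calc (m : ℝ) * 8 = ε * (8 * (m / ε)) := by field_simp
      _ ≤ _ := by gcongr
  · rw [mul_div_assoc]; linarith

/-- The pairs of a hopset on about `n / g ^ t` vertices are realized through hopsets on sparser and
sparser sets of vertices that hit longer and longer shortest walks. -/
lemma realize_iter [Fintype V] (hG : G.Nonneg) (hS : G.Symmetric) {m r : ℕ}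
    (hr : 6 ≤ r) {n lam g : ℝ} (hn : n = Fintype.card V) (hlam : lam = 1 + 3 * Real.log n)
    (hg : 1 ≤ g) {T : ℕ} (hT : g ^ T = n) :
    ∀ j t : ℕ, t + j = T → ∀ P : Finset (V × V),
      (P.card : ℝ) ≤ 12 * (m + 1) * lam * (n * lam / g ^ t) ^ (1 + 1 / (2 ^ (m + 1) - 1 : ℝ)) →
      Realizable G P ((j + 1) * (144 * (m + 1) * lam ^ 3 * (6 * r) ^ m * g *
        n ^ (1 + 1 / (2 ^ (m + 1) - 1 : ℝ)))) ((1 + m * (8 / r)) ^ j) := by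
  have hM : (2 : ℝ) ≤ 2 ^ (m + 1) := by
    rw [pow_succ]
    have : (1 : ℝ) ≤ 2 ^ m := one_le_pow₀ (by norm_num)
    linarith
  set M : ℝ := 2 ^ (m + 1) with hMdef
  set δ : ℝ := 1 / (M - 1) with hδ
  have hδ0 : 0 < δ := by have : 0 < M - 1 := by linarith
                         positivity
  have hδ1 : δ ≤ 1 := by rw [hδ, div_le_one (by linarith)]; linarith
  have hn1 : 1 ≤ n := hT ▸ one_le_pow₀ hg
  have hn0 : 0 < n := by linarith
  have hlog : 0 ≤ Real.log n := Real.log_nonneg hn1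
  have hlam1 : 1 ≤ lam := by linarith
  have hlam0 : 0 < lam := by linarith
  have hlamδ : lam ^ δ ≤ lam := by
    calc lam ^ δ ≤ lam ^ (1 : ℝ) := Real.rpow_le_rpow_of_exponent_le hlam1 hδ1
      _ = lam := Real.rpow_one _
  have hnδ : 1 ≤ n ^ δ := Real.one_le_rpow hn1 hδ0.le
  have hne : n ^ (1 + δ) = n * n ^ δ := by rw [Real.rpow_add hn0, Real.rpow_one]
  have hr6 : (6 : ℝ) ≤ r := by exact_mod_cast hr
  have hrm : (1 : ℝ) ≤ (6 * r) ^ m := one_le_pow₀ (by linarith)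
  have hσ : (1 : ℝ) ≤ 1 + m * (8 / r) := by
    have : (0 : ℝ) ≤ m * (8 / r) := by positivity
    linarith
  rw [hne]
  set C : ℝ := 144 * (m + 1) * lam ^ 3 * (6 * r) ^ m * g * (n * n ^ δ) with hC
  have hC0 : 0 ≤ C := by positivity
  intro j
  induction j with
  | zero =>
    intro t ht P hP
    rw [show t = T by omega, hT, mul_div_cancel_left₀ _ hn0.ne'] at hP
    refine (realizable_direct hG P).mono ?_ (by simp)
    rw [← hn]
    have e1 : lam ^ (1 + δ) ≤ lam * lam := by
      rw [Real.rpow_add hlam0, Real.rpow_one]; gcongr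
    calc (P.card : ℝ) * n ≤ (12 * (m + 1) * lam * (lam * lam)) * n := by
          gcongr; exact hP.trans (by gcongr)
      _ = 12 * (m + 1) * lam ^ 3 * 1 * 1 * (n * 1) := by ring
      _ ≤ 144 * (m + 1) * lam ^ 3 * (6 * r) ^ m * g * (n * n ^ δ) := by
          gcongr
          norm_num
      _ = _ := by rw [hC]; push_cast; ring
  | succ j IH =>
    intro t ht P hP
    have hg0 : 0 < g := by linarith
    -- The next set hits all blocks of `ℓ ≈ g ^ (t + 1)` vertices; the factor `ℓ` for the lengths of
    -- the short walks is balanced by the number of pairs, which is about `(n / g ^ t) ^ (1 + δ)`.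
    have hgt : g ^ (t + 1) ≤ n := hT ▸ pow_le_pow_right₀ hg (by omega)
    have hgt1 : 1 ≤ g ^ (t + 1) := one_le_pow₀ hg
    set ℓ := ⌈g ^ (t + 1)⌉₊ with hℓ
    have hℓ1 : g ^ (t + 1) ≤ ℓ := Nat.le_ceil _
    have hℓ2 : (ℓ : ℝ) ≤ 2 * g ^ (t + 1) := by
      have := (Nat.ceil_lt_add_one (show 0 ≤ g ^ (t + 1) by positivity)).le
      linarith
    have hℓ0 : 1 ≤ ℓ := Nat.ceil_pos.2 (by positivity)
    classical
    obtain ⟨B, hB, hBc⟩ := exists_hits hG ℓ hℓ0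
    rw [← hn, ← hlam] at hBc
    have hBc' : (B.card : ℝ) ≤ n * lam / g ^ (t + 1) := by
      calc _ ≤ n / ℓ * lam := hBc
        _ ≤ n / g ^ (t + 1) * lam := by gcongr
        _ = _ := by ring
    have hN1 : 1 ≤ n * lam / g ^ (t + 1) := by
      rw [le_div_iff₀ (by positivity), one_mul]
      nlinarith
    obtain ⟨H, h1, h2, -⟩ := hopset_of_card hG hS B hBc' hN1
      (lam := lam) (by rw [← hn]; linarith) m
    have hH := IH (t + 1) (by omega) H h1
    have := realizable_step hG hℓ0 hB (h2 r hr) (one_le_pow₀ hσ) hH P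
    refine this.mono ?_ (by rw [pow_succ])
    have e1 : (n * lam / g ^ t) ^ δ ≤ n ^ δ * lam := by
      calc _ ≤ (n * lam) ^ δ := by
            apply Real.rpow_le_rpow (by positivity) _ hδ0.le
            exact div_le_self (by positivity) (one_le_pow₀ hg)
        _ = n ^ δ * lam ^ δ := Real.mul_rpow hn0.le hlam0.le
        _ ≤ _ := by gcongr
    have e2 : (n * lam / g ^ t) ^ (1 + δ) * g ^ (t + 1) ≤ n * lam * g * (n ^ δ * lam) := by
      rw [Real.rpow_add (by positivity), Real.rpow_one]
      calc _ = n * lam * g * (n * lam / g ^ t) ^ δ := by rw [pow_succ]; field_simp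
        _ ≤ _ := by gcongr
    have e3 : (P.card : ℝ) * (((6 * r) ^ m + 2) * (2 * ℓ)) ≤ C := by
      calc _ ≤ (12 * (m + 1) * lam * (n * lam / g ^ t) ^ (1 + δ)) *
            ((3 * (6 * r) ^ m) * (2 * (2 * g ^ (t + 1)))) := by
            gcongr
            linarith
        _ = 144 * (m + 1) * lam * (6 * r) ^ m * ((n * lam / g ^ t) ^ (1 + δ) * g ^ (t + 1)) := by
            ring
        _ ≤ 144 * (m + 1) * lam * (6 * r) ^ m * (n * lam * g * (n ^ δ * lam)) := by gcongr
        _ = C := by rw [hC]; ring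
    push_cast
    linarith

end Iterate

end Hopsets

/-! ### Choice of parameters -/

namespace Hopsets

section Final

/-- The factor `2 ^ O(k ^ 2)` lost by splitting the error among `2 ^ (k + 3)` rounds is at most a
constant times the `2 ^ (k + 3)`-th root of `exp L`, because `L / 2 ^ k` is exponential in `k`. -/
lemma exists_round_const : ∃ C : ℝ, 1 ≤ C ∧ ∀ (k : ℕ) (L : ℝ), Real.exp k ≤ L →
    (2 : ℝ) ^ ((k + 3) * (k + 1)) ≤ C * Real.exp (L / (8 * 2 ^ k)) := by
  have ht := tendsto_pow_const_div_const_pow_of_one_lt 2 (show (1 : ℝ) < 5 / 4 by norm_num)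
  have hev := ht.eventually (gt_mem_nhds (show (0 : ℝ) < 1 / 128 by norm_num))
  obtain ⟨k0, hk0⟩ := Filter.eventually_atTop.1 hev
  have h2 : ∀ k : ℕ, (2 : ℝ) ^ ((k + 3) * (k + 1)) ≤ Real.exp ((k + 3) ^ 2) := by
    intro k
    have e1 : (2 : ℝ) ≤ Real.exp 1 := by have := Real.exp_one_gt_d9; linarith
    calc (2 : ℝ) ^ ((k + 3) * (k + 1)) ≤ (Real.exp 1) ^ ((k + 3) * (k + 1)) := by gcongr
      _ = Real.exp ((k + 3) * (k + 1)) := by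
        rw [← Real.exp_nat_mul]; push_cast; ring_nf
      _ ≤ _ := by
        apply Real.exp_le_exp.2
        have : (0 : ℝ) ≤ k := Nat.cast_nonneg k
        nlinarith
  refine ⟨Real.exp ((k0 + 4) ^ 2), Real.one_le_exp (by positivity), fun k L hL => ?_⟩
  have hL0 : 0 < L := (Real.exp_pos _).trans_le hL
  rcases le_or_gt k (k0 + 1) with hk | hk
  · have e1 : (1 : ℝ) ≤ Real.exp (L / (8 * 2 ^ k)) := Real.one_le_exp (by positivity)
    have hk' : (k : ℝ) ≤ k0 + 1 := by exact_mod_cast hk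
    calc _ ≤ Real.exp ((k + 3) ^ 2) := h2 k
      _ ≤ Real.exp ((k0 + 4) ^ 2) := by
        apply Real.exp_le_exp.2
        have : (0 : ℝ) ≤ k := Nat.cast_nonneg k
        nlinarith
      _ = Real.exp ((k0 + 4) ^ 2) * 1 := (mul_one _).symm
      _ ≤ _ := by gcongr
  · have e1 : (1 : ℝ) ≤ Real.exp ((k0 + 4) ^ 2) := Real.one_le_exp (by positivity)
    have hk1 : (1 : ℝ) ≤ k := by exact_mod_cast (show 1 ≤ k by omega)
    have h3 := hk0 k (by omega)
    have hp : (0 : ℝ) < (5 / 4) ^ k := by positivity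
    rw [div_lt_iff₀ hp] at h3
    have h4 : ((5 : ℝ) / 4) ^ k / 8 ≤ L / (8 * 2 ^ k) := by
      have e3 : ((5 : ℝ) / 2) ^ k ≤ L := by
        refine le_trans ?_ hL
        have : Real.exp k = Real.exp 1 ^ k := by rw [← Real.exp_nat_mul, mul_one]
        rw [this]
        have := Real.exp_one_gt_d9
        gcongr
        linarith
      have e4 : ((5 : ℝ) / 4) ^ k = (5 / 2) ^ k / 2 ^ k := by rw [← div_pow]; norm_num
      rw [e4, div_div, mul_comm (8 : ℝ)]
      gcongr
    calc _ ≤ Real.exp ((k + 3) ^ 2) := h2 k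
      _ ≤ Real.exp (L / (8 * 2 ^ k)) := by
        apply Real.exp_le_exp.2
        nlinarith
      _ = 1 * Real.exp (L / (8 * 2 ^ k)) := (one_mul _).symm
      _ ≤ _ := by gcongr

variable {V : Type} {G : WDigraph V}

/-- If the pairs of a hopset for all of `V` are realized in `E` with stretch `η`, then paths of the
hopset are followed in `E`. Their other steps are walks of at most two edges of `G`; by the emulator
property, each of them costs at most `η * 5 ^ k * (2 * W)`, which yields the additive term. -/
lemma final_stretch [Fintype V] (hG : G.Nonneg) {H : Finset (V × V)} {k r : ℕ}
    (hH : IsHop G.dist Finset.univ H k r)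
    (hem : ∀ (d' : V → V → ℝ≥0∞) (η : ℝ≥0∞), (∀ x y z, d' x z ≤ d' x y + d' y z) →
        (∀ e ∈ H, d' e.1 e.2 ≤ η * G.dist e.1 e.2) →
        ∀ u ∈ Finset.univ, ∀ v ∈ (Finset.univ : Finset V), d' u v ≤ η * (5 ^ k * G.dist u v))
    {E : Finset (V × V)} {η W : ℝ} (hη : 1 ≤ η) (hW : 0 ≤ W) (hGW : ∀ e ∈ G.edges, G.w e ≤ W)
    (hE : ∀ p ∈ H, (G.sub E).dist p.1 p.2 ≤ ENNReal.ofReal η * G.dist p.1 p.2) (u v : V) :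
    (G.sub E).dist u v ≤ ENNReal.ofReal (η * (1 + k * (8 / r))) * G.dist u v +
      ENNReal.ofReal (((6 * r) ^ k + 2) * (η * (5 ^ k * (2 * W)))) := by
  have hfac : (0 : ℝ) ≤ k * (8 / r) := by positivity
  by_cases h : G.Reachable u v
  swap
  · rw [dist_eq_top_of_not_reachable h, ENNReal.mul_top]
    · simp
    · have : 0 < η * (1 + k * (8 / r)) := by positivity
      simpa using this
  have hGE : (G.sub E).Nonneg := hG
  obtain ⟨S, -, h2, h3⟩ := hop_all hG le_rfl (hits_univ hG) hH h
  have key := h3 (G.sub E).dist (ENNReal.ofReal η) (ENNReal.ofReal (η * (5 ^ k * (2 * W))))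
    dist_self' (dist_tri hGE) (by
      intro e he
      rcases h2 e he with h1 | ⟨l, hl, hlen, -⟩
      · exact (hE e h1).trans le_self_add
      · refine le_trans ?_ le_add_self
        have hd : G.dist e.1 e.2 ≤ ENNReal.ofReal (2 * W) := by
          refine (dist_le_of_walk hl).trans (ENNReal.ofReal_le_ofReal ?_)
          have h4 : (l.map G.w).sum ≤ (l.map G.w).length • W := by
            apply List.sum_le_card_nsmul
            intro x hx
            obtain ⟨f, hf, rfl⟩ := List.mem_map.1 hx
            exact hGW f (walk_mem hl f hf)
          rw [List.length_map, nsmul_eq_mul] at h4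
          have h5 : (l.length : ℝ) ≤ 2 := by exact_mod_cast hlen
          nlinarith
        calc _ ≤ ENNReal.ofReal η * (5 ^ k * G.dist e.1 e.2) :=
              hem _ _ (dist_tri hGE) hE _ (Finset.mem_univ _) _ (Finset.mem_univ _)
          _ ≤ ENNReal.ofReal η * (5 ^ k * ENNReal.ofReal (2 * W)) := by gcongr
          _ = _ := by
            rw [ENNReal.ofReal_mul (p := η) (by positivity),
              ENNReal.ofReal_mul (p := 5 ^ k) (by positivity), ENNReal.ofReal_pow (by norm_num)]
            norm_num)
  refine key.trans (le_of_eq ?_)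
  congr 1
  · rw [ENNReal.ofReal_mul (by positivity), ENNReal.ofReal_mul (by positivity),
      ENNReal.ofReal_toReal (dist_ne_top h), mul_assoc]
  · rw [ENNReal.ofReal_mul (p := (6 * (r : ℝ)) ^ k + 2) (by positivity)]
    congr 1
    rw [← ENNReal.ofReal_natCast]
    push_cast
    rfl

/-- The pairs of the hopset with `k` levels are realized by one hopset with `k + 1` levels on all
vertices, and the pairs of the latter by the hopsets of `realize_iter`. -/
lemma realize_hopset [Fintype V] (hG : G.Nonneg) (hS : G.Symmetric) {C n L ε : ℝ} {k : ℕ}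
    (hC1 : 1 ≤ C) (hC : (2 : ℝ) ^ ((k + 3) * (k + 1)) ≤ C * Real.exp (L / (8 * 2 ^ k)))
    (hn : n = Fintype.card V) (hn0 : 0 < n) (hLn : L = Real.log n) (hL : Real.exp k ≤ L)
    (hk : 1 ≤ k) (hε0 : 0 < ε) (hε1 : ε < 1) (H : Finset (V × V))
    (hH : (H.card : ℝ) ≤ 12 * (k + 1) * (1 + 3 * L) * n ^ (1 + 1 / (2 ^ (k + 1) - 1 : ℝ))) :
    Realizable G H (170000 * C * (n ^ (1 + 1 / (2 ^ (k + 1) - 1 : ℝ)) *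
      (108 * k / ε) ^ (2 * k) * L ^ 5)) ((1 + 2 * ε) * (1 + ε)) := by
  have hk' : (1 : ℝ) ≤ k := by exact_mod_cast hk
  have hkL : (2 : ℝ) ^ k ≤ L := by
    refine le_trans ?_ hL
    have : Real.exp k = Real.exp 1 ^ k := by rw [← Real.exp_nat_mul, mul_one]
    rw [this]
    have := Real.exp_one_gt_d9
    gcongr
    linarith
  have hk2 : (k : ℝ) + 1 ≤ 2 ^ k := by exact_mod_cast Nat.lt_two_pow_self (n := k)
  have hL1 : 1 ≤ L := by linarith
  have hn1 : 1 ≤ n := by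
    by_contra hlt
    have := Real.log_nonpos hn0.le (not_le.1 hlt).le
    linarith
  set lam : ℝ := 1 + 3 * L with hlam
  have hlam4 : lam ≤ 4 * L := by linarith
  have hlam1 : 1 ≤ lam := by linarith
  set T : ℕ := 2 ^ (k + 3) with hT
  have hT0 : T ≠ 0 := by positivity
  have hTr : (T : ℝ) = 8 * 2 ^ k := by rw [hT]; push_cast; ring
  have hT1 : (8 : ℝ) ≤ T := by
    rw [hTr]
    have : (1 : ℝ) ≤ 2 ^ k := one_le_pow₀ (by norm_num)
    linarith
  have hTpos : (0 : ℝ) < T := by linarith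
  set g : ℝ := n ^ ((T : ℝ)⁻¹) with hg
  have hg1 : 1 ≤ g := Real.one_le_rpow hn1 (by positivity)
  have hgT : g ^ T = n := Real.rpow_inv_natCast_pow hn0.le hT0
  have hgexp : Real.exp (L / (8 * 2 ^ k)) = g := by
    rw [hg, Real.rpow_def_of_pos hn0, ← hLn, hTr, div_eq_mul_inv]
  rw [hgexp] at hC
  have hεT0 : 0 < ε / T := by positivity
  have hεT1 : ε / T < 1 := by rw [div_lt_one hTpos]; linarith
  obtain ⟨r1, hr1, hr1s, hr1c⟩ := exists_accuracy (m := k + 1) (by omega) hεT0 hεT1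
  obtain ⟨r2, hr2, hr2s, hr2c⟩ := exists_accuracy (m := k + 1) (by omega) hε0 hε1
  have hnl : 1 ≤ n * lam / g ^ 0 := by rw [pow_zero, div_one]; nlinarith
  obtain ⟨P, hP1, hP2, -⟩ := hopset_of_card hG hS (Finset.univ : Finset V) (lam := lam)
    (N := n * lam / g ^ 0) (by
      rw [Finset.card_univ, ← hn, pow_zero, div_one]; nlinarith) hnl
      (by rw [← hn, ← hLn]; linarith) (k + 1)
  have hiter := realize_iter hG hS hr1 hn (lam := lam) (by rw [hlam, hLn]) hg1 hgT T 0
    (by omega) P (by exact_mod_cast hP1)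
  have hσ : (1 + ((k + 1 : ℕ) : ℝ) * (8 / r1)) ^ T ≤ 1 + 2 * ε := by
    calc _ ≤ (Real.exp (ε / T)) ^ T := by
          have := Real.add_one_le_exp (ε / T)
          gcongr
          linarith
      _ = Real.exp ε := by rw [← Real.exp_nat_mul]; congr 1; field_simp
      _ ≤ _ := by
          have h1 := Real.abs_exp_sub_one_le (x := ε) (by rw [abs_of_pos hε0]; exact hε1.le)
          rw [abs_of_pos hε0] at h1
          have := (abs_le.1 h1).2
          linarith
  have hstep := realizable_step hG le_rfl (hits_univ hG) (hP2 r2 hr2) (s := 1 + 2 * ε)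
    (by linarith) (hiter.mono le_rfl hσ) H
  refine hstep.mono ?_ (mul_le_mul_of_nonneg_left (by linarith) (by linarith))
  set Y : ℝ := n ^ (1 + 1 / (2 ^ (k + 1) - 1 : ℝ)) with hY
  set A : ℝ := (108 * k / ε) ^ (2 * k) with hA
  have hY0 : 0 ≤ Y := by positivity
  have hA0 : 0 ≤ A := by positivity
  have hA' : (54 * ((k + 1 : ℕ) : ℝ) / ε) ^ (k + 1) ≤ A := by
    have e1 : 1 ≤ 108 * k / ε := by rw [le_div_iff₀ hε0]; linarith
    calc _ ≤ (108 * k / ε) ^ (k + 1) := by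
          gcongr ?_ ^ _
          gcongr ?_ / _
          push_cast; linarith
      _ ≤ _ := pow_le_pow_right₀ e1 (by omega)
  have hB2 : (6 * (r2 : ℝ)) ^ (k + 1) ≤ A := le_trans (by gcongr) hA'
  have hB1 : (6 * (r1 : ℝ)) ^ (k + 1) ≤ A * (C * g) := by
    calc _ ≤ (54 * ((k + 1 : ℕ) : ℝ) / (ε / T)) ^ (k + 1) := by gcongr
      _ = (54 * ((k + 1 : ℕ) : ℝ) / ε) ^ (k + 1) * 2 ^ ((k + 3) * (k + 1)) := by
        rw [pow_mul, ← mul_pow, hT]; push_cast; congr 1; field_simp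
      _ ≤ _ := by gcongr
  -- One factor `g` pays for `2 ^ O(k ^ 2)`, the other is the loss in `realize_iter`; both are
  -- covered by passing from `k` to `k + 1` levels.
  have hgY : g * g * n ^ (1 + 1 / (2 ^ (k + 1 + 1) - 1 : ℝ)) ≤ Y := by
    rw [hg, hY, ← Real.rpow_add hn0, ← Real.rpow_add hn0]
    apply Real.rpow_le_rpow_of_exponent_le hn1
    have e1 : (2 : ℝ) ^ (k + 1) = 2 * 2 ^ k := by ring
    have e2 : (2 : ℝ) ^ (k + 1 + 1) = 4 * 2 ^ k := by ring
    rw [hTr, e1, e2]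
    set z : ℝ := 2 ^ k
    have hz : 2 ≤ z := by linarith
    have h1 : 0 < 2 * z - 1 := by linarith
    have h2 : 0 < 4 * z - 1 := by linarith
    have e3 : 1 / (2 * z - 1) - 1 / (4 * z - 1) - (1 / (4 * z)) =
      (6 * z - 1) / ((2 * z - 1) * (4 * z - 1) * (4 * z)) := by
      have h1' := h1.ne'
      have h2' := h2.ne'
      have hz0 : z ≠ 0 := by positivity
      rw [div_sub_div _ _ h1' h2', div_sub_div _ _ (mul_ne_zero h1' h2') (by simpa using hz0),
        div_eq_div_iff (by positivity) (by positivity)]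
      ring
    have e4 : 0 ≤ (6 * z - 1) / ((2 * z - 1) * (4 * z - 1) * (4 * z)) := by
      apply div_nonneg
      · linarith
      · positivity
    have e5 : (8 * z)⁻¹ + (8 * z)⁻¹ = 1 / (4 * z) := by field_simp; norm_num
    linarith
  have hr2' : (1 : ℝ) ≤ (6 * r2) ^ (k + 1) := by
    have : (6 : ℝ) ≤ r2 := by exact_mod_cast hr2
    exact one_le_pow₀ (by linarith)
  have c1 : (H.card : ℝ) * (((6 * r2) ^ (k + 1) + 2) * (2 * (1 : ℕ))) ≤
      288 * (Y * A * L ^ 5) := by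
    calc _ ≤ (12 * L * (4 * L) * Y) * ((3 * A) * (2 * (1 : ℕ))) := by
          gcongr
          · refine hH.trans ?_
            gcongr
            linarith
          · linarith
      _ = 288 * (Y * A * L ^ 2) := by push_cast; ring
      _ ≤ _ := by
          gcongr
          norm_num
  have c2 : ((T : ℝ) + 1) * (144 * (((k + 1 : ℕ) : ℝ) + 1) * lam ^ 3 * (6 * r1) ^ (k + 1) * g *
      n ^ (1 + 1 / (2 ^ (k + 1 + 1) - 1 : ℝ))) ≤ 165888 * C * (Y * A * L ^ 5) := by
    calc _ ≤ (9 * L) * (144 * (2 * L) * (4 * L) ^ 3 * (A * (C * g)) * g *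
          n ^ (1 + 1 / (2 ^ (k + 1 + 1) - 1 : ℝ))) := by
          gcongr
          · rw [hTr]; linarith
          · push_cast; linarith
      _ = 165888 * C * ((g * g * n ^ (1 + 1 / (2 ^ (k + 1 + 1) - 1 : ℝ))) * A * L ^ 5) := by ring
      _ ≤ _ := by gcongr
  have hZ : 0 ≤ Y * A * L ^ 5 := by positivity
  have c3 : 288 * (Y * A * L ^ 5) ≤ 288 * C * (Y * A * L ^ 5) := by
    gcongr; linarith
  have c4 : 0 ≤ C * (Y * A * L ^ 5) := by positivity
  calc _ ≤ 288 * (Y * A * L ^ 5) + 165888 * C * (Y * A * L ^ 5) := add_le_add c1 c2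
    _ ≤ 288 * C * (Y * A * L ^ 5) + 165888 * C * (Y * A * L ^ 5) := by gcongr
    _ ≤ 170000 * C * (Y * A * L ^ 5) := by linarith

end Final

end Hopsets

open Hopsets in
/-- There are constants `c, c' ≥ 1` such that every `n`-vertex
undirected graph with nonnegative edge weights of maximum weight `W_max`, every
`ε ∈ (0,1)` and every integer `1 ≤ k ≤ log log n`, admits a subgraph `G' ⊆ G`
with `≤ n^{1+1/(2^{k+1}−1)}·(c·k/ε)^{2k}·(log n)^{c'}` edges that is a
`(1+ε', β')`-spanner, where `ε' ≤ c·ε·2^k·(log log n − k + 1)` and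
`β' ≤ (c·k/ε)^k·2^k·W_max`. -/
theorem stmt_10 :
    ∃ c c' : ℝ, 1 ≤ c ∧ 1 ≤ c' ∧
      ∀ n : ℕ, ∀ G : WDigraph (Fin n), G.Symmetric → G.Nonneg →
      ∀ Wmax : ℝ, (∀ e ∈ G.edges, G.w e ≤ Wmax) →
      ∀ ε : ℝ, ε ∈ Set.Ioo (0 : ℝ) 1 →
      ∀ k : ℕ, 1 ≤ k → (k : ℝ) ≤ Real.log (Real.log n) →
        ∃ (ε' β' : ℝ) (E' : Finset (Fin n × Fin n)),
          E' ⊆ G.edges ∧ (∀ e ∈ E', (e.2, e.1) ∈ E') ∧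
          (E'.card : ℝ) ≤ (n : ℝ) ^ (1 + 1 / (2 ^ (k + 1) - 1 : ℝ))
              * (c * (k : ℝ) / ε) ^ (2 * k) * (Real.log n) ^ c' ∧
          ε' ≤ c * ε * 2 ^ k * (Real.log (Real.log n) - (k : ℝ) + 1) ∧
          β' ≤ (c * (k : ℝ) / ε) ^ k * 2 ^ k * Wmax ∧
          ∀ u v, (G.sub E').dist u v ≤
            ENNReal.ofReal (1 + ε') * G.dist u v + ENNReal.ofReal β' := by
  obtain ⟨C, hC1, hC⟩ := exists_round_const
  refine ⟨108 * (340000 * C), 5, by linarith, by norm_num, ?_⟩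
  intro n G hS hG W hW ε hε k hk hkn
  obtain ⟨hε0, hε1⟩ := hε
  have hk' : (1 : ℝ) ≤ k := by exact_mod_cast hk
  -- `log n` is nonnegative, so `1 ≤ log (log n)` rules out all degenerate values of `log`.
  have hL0 : 0 < Real.log n := by
    rcases (Real.log_natCast_nonneg n).lt_or_eq with h | h
    · exact h
    · rw [← h, Real.log_zero] at hkn; linarith
  have hL : Real.exp k ≤ Real.log n := by
    rw [← Real.exp_log hL0]; exact Real.exp_le_exp.2 hkn
  have hn0 : (0 : ℝ) < n := by
    rcases Nat.eq_zero_or_pos n with h | h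
    · rw [h] at hL0; simp at hL0
    · exact_mod_cast h
  have hn1 : (1 : ℝ) ≤ n := by exact_mod_cast hn0
  have hcard : (n : ℝ) = Fintype.card (Fin n) := by simp
  obtain ⟨H, hH1, hH2, hH3⟩ := hopset_of_card hG hS (Finset.univ : Finset (Fin n))
    (N := n) (lam := 1 + 3 * Real.log n) (by rw [Finset.card_univ, ← hcard]) hn1
    (by rw [← hcard]; linarith) k
  obtain ⟨E0, hE0, hE0c, hE0d⟩ := realize_hopset hG hS hC1 (hC k _ hL) hcard hn0 rfl hL hk hε0 hε1
    H hH1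
  obtain ⟨r, hr, hrs, hrc⟩ := exists_accuracy hk hε0 hε1
  have hW' : ∀ e ∈ G.edges, G.w e ≤ max W 0 := fun e he => (hW e he).trans (le_max_left _ _)
  have hmain := fun u v => final_stretch hG (hH2 r hr) hH3 (E := E0 ∪ E0.image Prod.swap)
    (η := (1 + 2 * ε) * (1 + ε)) (by nlinarith) (le_max_right W 0) hW'
    (hE0d _ Finset.subset_union_left) u v
  have hCk : 0 ≤ (108 * (340000 * C) * (k : ℝ) / ε) ^ k * 2 ^ k := by positivity
  refine ⟨11 * ε, (108 * (340000 * C) * (k : ℝ) / ε) ^ k * 2 ^ k * W, E0 ∪ E0.image Prod.swap,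
    ?_, ?_, ?_, ?_, le_rfl, ?_⟩
  · refine Finset.union_subset hE0 fun e he => ?_
    obtain ⟨f, hf, rfl⟩ := Finset.mem_image.1 he
    exact (hS f (hE0 hf)).1
  · intro e he
    rcases Finset.mem_union.1 he with h | h
    · exact Finset.mem_union_right _ (Finset.mem_image_of_mem Prod.swap h)
    · obtain ⟨f, hf, rfl⟩ := Finset.mem_image.1 h
      exact Finset.mem_union_left _ hf
  · have h1 : ((E0 ∪ E0.image Prod.swap).card : ℝ) ≤ E0.card + E0.card := by
      exact_mod_cast (Finset.card_union_le _ _).trans (Nat.add_le_add le_rfl Finset.card_image_le)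
    have h5 : Real.log n ^ (5 : ℝ) = Real.log n ^ 5 := by
      rw [← Real.rpow_natCast]; norm_num
    rw [h5]
    have h2 : 340000 * C * (108 * k / ε) ^ (2 * k) ≤
        (108 * (340000 * C) * (k : ℝ) / ε) ^ (2 * k) := by
      have e1 : 108 * (340000 * C) * (k : ℝ) / ε = (340000 * C) * (108 * k / ε) := by ring
      rw [e1, mul_pow]
      gcongr
      exact le_self_pow₀ (by linarith) (by omega)
    calc _ ≤ (E0.card : ℝ) + E0.card := h1
      _ ≤ (n : ℝ) ^ (1 + 1 / (2 ^ (k + 1) - 1 : ℝ)) * (340000 * C * (108 * k / ε) ^ (2 * k)) *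
          Real.log n ^ 5 := by linarith
      _ ≤ _ := by gcongr
  · have h2 : (1 : ℝ) ≤ 2 ^ k := one_le_pow₀ (by norm_num)
    have h3 : 1 ≤ Real.log (Real.log n) - k + 1 := by linarith
    calc 11 * ε = 11 * ε * 1 * 1 := by ring
      _ ≤ _ := by gcongr; linarith
  · intro u v
    refine (hmain u v).trans (add_le_add ?_ ?_)
    · gcongr
      calc (1 + 2 * ε) * (1 + ε) * (1 + k * (8 / r)) ≤ (1 + 2 * ε) * (1 + ε) * (1 + ε) := by
            gcongr
        _ ≤ _ := by
            have s2 : ε * ε ≤ ε := by nlinarith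
            have s3 : ε * ε * ε ≤ ε := by nlinarith
            linarith
    · -- If `W < 0` then both sides are zero.
      have h1 : ENNReal.ofReal ((108 * (340000 * C) * (k : ℝ) / ε) ^ k * 2 ^ k * W) =
          ENNReal.ofReal ((108 * (340000 * C) * (k : ℝ) / ε) ^ k * 2 ^ k * max W 0) := by
        rcases le_total 0 W with h | h
        · rw [max_eq_left h]
        · rw [max_eq_right h, mul_zero, ENNReal.ofReal_zero, ENNReal.ofReal_eq_zero]
          exact mul_nonpos_of_nonneg_of_nonpos hCk h
      rw [h1]
      apply ENNReal.ofReal_le_ofReal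
      have hW0 : 0 ≤ max W 0 := le_max_right _ _
      set W0 := max W 0
      have hx : 1 ≤ (54 * k / ε) ^ k := one_le_pow₀ (by rw [le_div_iff₀ hε0]; linarith)
      have hr' : (6 * (r : ℝ)) ^ k ≤ (54 * k / ε) ^ k := by gcongr
      have h2 : 36 * (54 * (k : ℝ) / ε) ^ k * 5 ^ k ≤
          (108 * (340000 * C) * (k : ℝ) / ε) ^ k := by
        have e1 : 108 * (340000 * C) * (k : ℝ) / ε = (136000 * C) * ((54 * k / ε) * 5) := by ring
        rw [e1, mul_pow (136000 * C), mul_pow _ (5 : ℝ), mul_assoc]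
        gcongr
        calc (36 : ℝ) ≤ 136000 * C := by linarith
          _ ≤ _ := le_self_pow₀ (by linarith) (by omega)
      calc ((6 * (r : ℝ)) ^ k + 2) * ((1 + 2 * ε) * (1 + ε) * (5 ^ k * (2 * W0)))
          ≤ (3 * (54 * k / ε) ^ k) * (6 * (5 ^ k * (2 * W0))) := by
            gcongr
            · linarith
            · nlinarith
        _ = 36 * (54 * (k : ℝ) / ε) ^ k * 5 ^ k * 1 * W0 := by ring
        _ ≤ _ := by
          gcongr
          exact one_le_pow₀ (by norm_num)
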